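/- arXiv:1701.00988 — 12 statements merged into one kernel-verified Lean document; each statement's English description precedes it below -/
import Mathlib

section
/- Let s1 > s2 > s3 ≥ 2 be pairwise coprime positive integers, let S be the numerical semigroup generated by n1 = s2*s3, n2 = s1*s3, n3 = s1*s2, and set δ1 = s1 − s2, δ2 = s2 − s3. Then Δ(S) = Euc(δ1,δ2) \ {0}. -/
/-- Membership in the numerical semigroup generated by `n1, n2, n3`. -/
def memS (n1 n2 n3 s : ℕ) : Prop :=
  ∃ a1 a2 a3 : ℕ, a1 * n1 + a2 * n2 + a3 * n3 = s

/-- The set of factorizations of `s` with respect to the generators `n1, n2, n3`. -/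
def Zset (n1 n2 n3 s : ℕ) : Set (ℕ × ℕ × ℕ) :=
  {z | z.1 * n1 + z.2.1 * n2 + z.2.2 * n3 = s}

/-- Length of a factorization. -/
def len (z : ℕ × ℕ × ℕ) : ℕ := z.1 + z.2.1 + z.2.2

/-- The set of lengths of factorizations of `s`. -/
def Lset (n1 n2 n3 s : ℕ) : Set ℕ := len '' Zset n1 n2 n3 s

/-- The Delta set of an element `s`: differences of consecutive lengths. -/
def DeltaOf (n1 n2 n3 s : ℕ) : Set ℕ :=
  {d | ∃ l l' : ℕ, l ∈ Lset n1 n2 n3 s ∧ l' ∈ Lset n1 n2 n3 s ∧ l' < l ∧ d = l - l' ∧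
      ∀ t ∈ Lset n1 n2 n3 s, ¬ (l' < t ∧ t < l)}

/-- The Delta set of the numerical semigroup generated by `n1, n2, n3`. -/
def DeltaS (n1 n2 n3 : ℕ) : Set ℕ :=
  {d | ∃ s : ℕ, memS n1 n2 n3 s ∧ d ∈ DeltaOf n1 n2 n3 s}


/-- The sequence of remainders of the (slow) Euclidean algorithm:
`etaSeq a b 0 = a`, `etaSeq a b 1 = b`, `etaSeq a b (n+2) = etaSeq a b n % etaSeq a b (n+1)`.
(0-indexed: `etaSeq a b (j-1)` is the paper's `η_j` for `a = η₁`, `b = η₂`.) -/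
def etaSeq (a b : ℕ) : ℕ → ℕ
  | 0 => a
  | 1 => b
  | n + 2 => etaSeq a b n % etaSeq a b (n + 1)

/-- `Dset u v lo = {u - q*v : lo ≤ q ≤ ⌊u/v⌋}`. -/
def Dset (u v lo : ℕ) : Set ℕ :=
  {x | ∃ q : ℕ, lo ≤ q ∧ q ≤ u / v ∧ x = u - q * v}

/-- Euclid's set of `δ1` and `δ2`: the union of the sets `D(η_j, η_{j+1})` over all `j`
with `η_{j+1} > 0`, where `q` starts from `0` for the first two levels and from `1`
afterwards. -/
def Euc (δ1 δ2 : ℕ) : Set ℕ :=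
  {x | ∃ j : ℕ, 0 < etaSeq (max δ1 δ2) (min δ1 δ2) (j + 1) ∧
      x ∈ Dset (etaSeq (max δ1 δ2) (min δ1 δ2) j)
            (etaSeq (max δ1 δ2) (min δ1 δ2) (j + 1)) (if j ≤ 1 then 0 else 1)}

/-!
Let `s = N s1 s2 s3 + r1 s2 s3 + r2 s1 s3 + r3 s1 s2` with `rᵢ < sᵢ`. By coprimality the
factorizations of `s` are the triples `(s1 x + r1, s2 w + r2, s3 y + r3)` with `x + w + y = N`, so
up to a translation the lengths of `s` are the values of `δ1 x - δ2 y` on the lattice triangle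
`x + y ≤ N`. The gaps between consecutive values on such triangles are exactly the positive numbers
met by the subtractive Euclidean algorithm on `(δ1, δ2)`: a subtraction is an elementary change of
basis of the lattice, which in one direction shrinks the box spanned by a gap and in the other
tracks a basis whose two vectors have the current pair as values (up to sign). Grouping the
subtractions into divisions with remainder gives Euclid's set.
-/

/-- `SubtractiveEuclid a b d` says that `d` is an entry of one of the pairs met by the subtractive
Euclidean algorithm started at `(a, b)`. The subtraction steps are read backwards, as additions, and
adding `0` is allowed since it leaves the pair unchanged. -/
inductive SubtractiveEuclid : ℕ → ℕ → ℕ → Prop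
  | left (a b : ℕ) : SubtractiveEuclid a b a
  | right (a b : ℕ) : SubtractiveEuclid a b b
  | add_left {a b d : ℕ} : SubtractiveEuclid a b d → SubtractiveEuclid (a + b) b d
  | add_right {a b d : ℕ} : SubtractiveEuclid a b d → SubtractiveEuclid a (a + b) d

namespace SubtractiveEuclid

theorem symm {a b d : ℕ} (h : SubtractiveEuclid a b d) : SubtractiveEuclid b a d := by
  induction h with
  | left a b => exact right b a
  | right a b => exact left b a
  | @add_left a b d _ ih => exact add_comm b a ▸ ih.add_right
  | @add_right a b d _ ih => exact add_comm b a ▸ ih.add_left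

theorem add_mul_left {a b d : ℕ} (h : SubtractiveEuclid a b d) (q : ℕ) :
    SubtractiveEuclid (a + q * b) b d := by
  induction q with
  | zero => simpa using h
  | succ q ih => simpa only [Nat.succ_mul, add_assoc] using ih.add_left

theorem of_sub_mul {u v q d : ℕ} (hq : q * v ≤ u) (h : SubtractiveEuclid (u - q * v) v d) :
    SubtractiveEuclid u v d := by
  simpa only [Nat.sub_add_cancel hq] using h.add_mul_left q

theorem zero_right_iff {u d : ℕ} : SubtractiveEuclid u 0 d ↔ d = u ∨ d = 0 := by
  refine ⟨fun h => ?_, ?_⟩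
  · generalize hv : 0 = v at h
    induction h with
    | left => exact .inl rfl
    | right => exact .inr rfl
    | add_left _ ih => subst hv; exact ih rfl
    | add_right _ ih => have := ih (by omega); omega
  · rintro (rfl | rfl)
    exacts [left _ _, right _ _]

theorem mem_dset_or_mod {u v d : ℕ} (hv : 0 < v) (h : SubtractiveEuclid u v d) :
    d ∈ Dset u v 0 ∨ SubtractiveEuclid v (u % v) d := by
  induction h with
  | left => exact .inl ⟨0, le_rfl, Nat.zero_le _, by simp⟩
  | right => exact .inr (left _ _)
  | @add_left a b d _ ih =>
    rw [Nat.add_mod_right]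
    refine (ih hv).imp_left ?_
    rintro ⟨q, -, hq, rfl⟩
    refine ⟨q + 1, Nat.zero_le _, ?_, by rw [Nat.succ_mul, Nat.add_sub_add_right]⟩
    rw [Nat.add_div_right a hv]
    exact Nat.succ_le_succ hq
  | @add_right a b d h _ =>
    right
    rcases Nat.eq_zero_or_pos b with rfl | hb
    · simpa using h
    · rw [Nat.mod_eq_of_lt (Nat.lt_add_of_pos_right hb), add_comm]
      exact h.symm.add_left

theorem iff_mem_dset_or_mod {u v d : ℕ} (hv : 0 < v) :
    SubtractiveEuclid u v d ↔ d ∈ Dset u v 0 ∨ SubtractiveEuclid v (u % v) d := by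
  refine ⟨mem_dset_or_mod hv, ?_⟩
  rintro (⟨q, -, hq, rfl⟩ | h)
  · exact of_sub_mul ((Nat.le_div_iff_mul_le hv).1 hq) (left _ _)
  · refine of_sub_mul (Nat.div_mul_le_self u v) ?_
    exact Nat.mod_eq_sub_div_mul ▸ h.symm

end SubtractiveEuclid

theorem etaSeq_succ (u v j : ℕ) : etaSeq u v (j + 1) = etaSeq v (u % v) j := by
  induction j using Nat.twoStepInduction with
  | zero => rfl
  | one => rfl
  | more j ih ih' => rw [etaSeq, ih, ih', etaSeq]

theorem etaSeq_zero_right_eq_zero_or (u j : ℕ) : etaSeq u 0 j = 0 ∨ etaSeq u 0 (j + 1) = 0 := by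
  induction j with
  | zero => exact .inr rfl
  | succ j ih =>
    refine ih.symm.imp_right fun h => ?_
    rw [etaSeq, h, Nat.zero_mod]

/-- The part of Euclid's set that comes from nonzero multiples: the union of the `D(η_j, η_{j+1})`
over all `j` with `η_{j+1} > 0`, with `q` starting from `1` at every level, for the remainder
sequence of an arbitrary pair `(u, v)`. -/
def positiveQuotientEuc (u v : ℕ) : Set ℕ :=
  {x | ∃ j, 0 < etaSeq u v (j + 1) ∧ x ∈ Dset (etaSeq u v j) (etaSeq u v (j + 1)) 1}

theorem notMem_positiveQuotientEuc_zero_right {u x : ℕ} : x ∉ positiveQuotientEuc u 0 := by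
  rintro ⟨j, hpos, q, hq, hq', -⟩
  rcases etaSeq_zero_right_eq_zero_or u j with h | h
  · rw [h, Nat.zero_div] at hq'
    omega
  · exact hpos.ne' h

theorem mem_positiveQuotientEuc_iff {u v x : ℕ} (hv : 0 < v) :
    x ∈ positiveQuotientEuc u v ↔ x ∈ Dset u v 1 ∨ x ∈ positiveQuotientEuc v (u % v) := by
  rw [positiveQuotientEuc, Set.mem_ofPred_eq, ← Nat.or_exists_add_one]
  simp only [etaSeq_succ u v]
  exact or_congr (and_iff_right hv) Iff.rfl

theorem mem_dset_zero_iff {u v x : ℕ} : x ∈ Dset u v 0 ↔ x = u ∨ x ∈ Dset u v 1 := by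
  constructor
  · rintro ⟨_ | q, -, hq, rfl⟩
    · exact .inl (by simp)
    · exact .inr ⟨q + 1, Nat.le_add_left 1 q, hq, rfl⟩
  · rintro (rfl | ⟨q, -, hq, rfl⟩)
    · exact ⟨0, le_rfl, Nat.zero_le _, by simp⟩
    · exact ⟨q, Nat.zero_le q, hq, rfl⟩

theorem mod_mem_dset_zero (u v : ℕ) : u % v ∈ Dset u v 0 :=
  ⟨u / v, Nat.zero_le _, le_rfl, Nat.mod_eq_sub_div_mul⟩

theorem subtractiveEuclid_iff_mem_positiveQuotientEuc {u v x : ℕ} :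
    SubtractiveEuclid u v x ↔ x = u ∨ x = v ∨ x ∈ positiveQuotientEuc u v := by
  induction v, u using Nat.gcd.induction with
  | H0 u =>
    simp only [SubtractiveEuclid.zero_right_iff, notMem_positiveQuotientEuc_zero_right, or_false]
  | H1 v u hv ih =>
    have hmod : x = u % v → x = u ∨ x ∈ Dset u v 1 := by
      rintro rfl
      exact mem_dset_zero_iff.1 (mod_mem_dset_zero u v)
    rw [SubtractiveEuclid.iff_mem_dset_or_mod hv, ih, mem_dset_zero_iff,
      mem_positiveQuotientEuc_iff hv]
    tauto

theorem mem_euc_iff_mem_positiveQuotientEuc {a b x : ℕ} (ha : 0 < a) (hb : 0 < b) :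
    x ∈ Euc a b ↔ x = max a b ∨ x = min a b ∨ x ∈ positiveQuotientEuc (max a b) (min a b) := by
  have hpos : 0 < min a b := lt_min ha hb
  have hle : min a b ≤ max a b := min_le_max
  rw [Euc, Set.mem_ofPred_eq]
  generalize max a b = u at *
  generalize min a b = v at *
  constructor
  · rintro ⟨j, hj, q, hq, hq', rfl⟩
    rcases Nat.eq_zero_or_pos q with rfl | hq0
    · match j with
      | 0 => exact .inl (by simp [etaSeq])
      | 1 => exact .inr (.inl (by simp [etaSeq]))
      | j + 2 => simp at hq
    · exact .inr (.inr ⟨j, hj, q, hq0, hq', rfl⟩)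
  · rintro (rfl | rfl | ⟨j, hj, q, hq, hq', rfl⟩)
    · exact ⟨0, hpos, 0, Nat.zero_le _, Nat.zero_le _, by simp [etaSeq]⟩
    · rcases Nat.eq_zero_or_pos (u % x) with hmod | hmod
      · obtain ⟨k, rfl⟩ := Nat.dvd_of_mod_eq_zero hmod
        refine ⟨0, hpos, k - 1, Nat.zero_le _, ?_, ?_⟩
        · simp [etaSeq, hpos]
        · rw [etaSeq, etaSeq, Nat.sub_one_mul, mul_comm k, Nat.sub_sub_self hle]
      · exact ⟨1, hmod, 0, Nat.zero_le _, Nat.zero_le _, by simp [etaSeq]⟩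
    · exact ⟨j, hj, q, by split_ifs <;> omega, hq', rfl⟩

theorem mem_euc_iff_subtractiveEuclid {a b x : ℕ} (ha : 0 < a) (hb : 0 < b) :
    x ∈ Euc a b ↔ SubtractiveEuclid a b x := by
  rw [mem_euc_iff_mem_positiveQuotientEuc ha hb, ← subtractiveEuclid_iff_mem_positiveQuotientEuc]
  rcases le_total a b with h | h
  · rw [max_eq_right h, min_eq_left h]
    exact ⟨.symm, .symm⟩
  · rw [max_eq_left h, min_eq_right h]

/-- The positive differences between consecutive elements of a set of integers: the Delta set of a
set of lengths. Working in `ℤ` makes it invariant under translation and reflection. -/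
def gaps (L : Set ℤ) : Set ℕ :=
  {d | 0 < d ∧ ∃ l ∈ L, l + d ∈ L ∧ ∀ t ∈ L, l < t → l + d ≤ t}

theorem gaps_image_add_left (k : ℤ) (L : Set ℤ) : gaps ((k + ·) '' L) = gaps L := by
  ext d
  simp only [gaps, Set.mem_ofPred_eq, Set.exists_mem_image, Set.forall_mem_image, add_assoc,
    add_lt_add_iff_left, add_le_add_iff_left, (add_right_injective k).mem_set_image]

theorem gaps_subset_gaps_neg (L : Set ℤ) : gaps L ⊆ gaps (-L) := by
  rintro d ⟨hd, l, hl, hld, hmin⟩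
  refine ⟨hd, -(l + d), by simpa using hld, by simpa using hl, fun t ht hlt => ?_⟩
  by_contra! hgt
  have := hmin (-t) ht (by linarith)
  linarith

theorem deltaOf_eq_gaps (n1 n2 n3 s : ℕ) :
    DeltaOf n1 n2 n3 s = gaps ((↑) '' Lset n1 n2 n3 s) := by
  ext d
  simp only [DeltaOf, gaps, Set.mem_ofPred_eq, Set.exists_mem_image, Set.forall_mem_image,
    ← Nat.cast_add, Nat.cast_injective.mem_set_image, Nat.cast_lt, Nat.cast_le]
  constructor
  · rintro ⟨l, l', hl, hl', hlt, rfl, hmin⟩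
    have hadd : l' + (l - l') = l := Nat.add_sub_cancel' hlt.le
    refine ⟨Nat.sub_pos_of_lt hlt, l', hl', hadd.symm ▸ hl, fun t ht hlt' => ?_⟩
    rw [hadd]
    exact not_lt.1 fun h => hmin t ht ⟨hlt', h⟩
  · rintro ⟨hd, l, hl, hld, hmin⟩
    exact ⟨l + d, l, hld, hl, by omega, by omega, fun t ht h => (hmin ht h.1).not_gt h.2⟩

/-- The values of `a x - b y` at the lattice points of the triangle `x, y ≥ 0`, `x + y ≤ N`;
up to translation, the sets of lengths of the semigroup have this form. -/
def triangleValues (a b : ℤ) (N : ℕ) : Set ℤ :=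
  {t | ∃ x y : ℕ, x + y ≤ N ∧ t = a * x - b * y}

theorem neg_triangleValues (a b : ℤ) (N : ℕ) : -triangleValues a b N = triangleValues b a N := by
  ext t
  constructor
  · rintro ⟨x, y, hxy, ht⟩
    exact ⟨y, x, by omega, by linarith⟩
  · rintro ⟨x, y, hxy, ht⟩
    exact ⟨y, x, by omega, by linarith⟩

theorem gaps_triangleValues_comm (a b : ℤ) (N : ℕ) :
    gaps (triangleValues a b N) = gaps (triangleValues b a N) :=
  ((gaps_subset_gaps_neg _).trans_eq (by rw [neg_triangleValues])).antisymm
    ((gaps_subset_gaps_neg _).trans_eq (by rw [neg_triangleValues]))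

theorem subtractiveEuclid_of_forall_box_le {a b m n d : ℕ} (hd : 0 < d)
    (hval : (d : ℤ) = a * m - b * n)
    (hmin : ∀ m' ≤ m, ∀ n' ≤ n, (0 : ℤ) < a * m' - b * n' → (d : ℤ) ≤ a * m' - b * n') :
    SubtractiveEuclid a b d := by
  -- After a subtraction the box `[0, m] × [0, n]` becomes `[0, m] × [0, n - m]` or
  -- `[0, m - n] × [0, n]`, which embeds in the old box with the same values.
  have hamn : b * n + d = a * m := by zify; linarith
  obtain ⟨ha, hm⟩ : 0 < a ∧ 0 < m := CanonicallyOrderedAdd.mul_pos.1 (by omega)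
  have hda : d ≤ a := by
    have := hmin 1 hm 0 (Nat.zero_le n) (by simpa using ha)
    simpa using this
  rcases Nat.eq_zero_or_pos b with rfl | hb
  · have hle : a ≤ a * m := Nat.le_mul_of_pos_right a hm
    obtain rfl : d = a := by omega
    exact .left d 0
  rcases le_or_gt b a with hba | hab
  · rcases le_or_gt m n with hmn | hnm
    · obtain ⟨a, rfl⟩ := Nat.exists_eq_add_of_le' hba
      obtain ⟨n, rfl⟩ := Nat.exists_eq_add_of_le' hmn
      refine .add_left (subtractiveEuclid_of_forall_box_le (m := m) (n := n) hd ?_ ?_)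
      · rw [hval]; push_cast; ring
      · intro m' hm' n' hn'
        convert hmin m' hm' (n' + m') (by omega) using 2 <;> push_cast <;> ring
    · have hmul : a * (n + 1) ≤ a * m := Nat.mul_le_mul_left a hnm
      have hmul' : b * n ≤ a * n := Nat.mul_le_mul_right n hba
      obtain rfl : d = a := hda.antisymm (by linarith)
      exact .left d b
  · have hnm : n ≤ m := by
      by_contra! hmn
      have hmul : a * m ≤ b * n := Nat.mul_le_mul hab.le hmn.le
      omega
    obtain ⟨b, rfl⟩ := Nat.exists_eq_add_of_le hab.le
    obtain ⟨m, rfl⟩ := Nat.exists_eq_add_of_le' hnm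
    refine .add_right (subtractiveEuclid_of_forall_box_le (m := m) (n := n) hd ?_ ?_)
    · rw [hval]; push_cast; ring
    · intro m' hm' n' hn'
      convert hmin (m' + n') (by omega) n' hn' using 2 <;> push_cast <;> ring
termination_by a + b

theorem eq_or_eq_of_eq_mul_add_mul {a b m n d : ℕ} (hd : 0 < d) (h : d = a * m + b * n)
    (hda : 0 < a → 0 < m → d ≤ a) (hdb : 0 < b → 0 < n → d ≤ b) : d = a ∨ d = b := by
  rcases Nat.eq_zero_or_pos (a * m) with ham | ham
  · obtain ⟨hb, hn⟩ : 0 < b ∧ 0 < n := CanonicallyOrderedAdd.mul_pos.1 (by omega)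
    have hle : b ≤ b * n := Nat.le_mul_of_pos_right b hn
    exact .inr ((hdb hb hn).antisymm (by omega))
  · obtain ⟨ha, hm⟩ := CanonicallyOrderedAdd.mul_pos.1 ham
    have hle : a ≤ a * m := Nat.le_mul_of_pos_right a hm
    exact .inl ((hda ha hm).antisymm (by omega))

theorem subtractiveEuclid_of_mem_gaps {a b N d : ℕ} (h : d ∈ gaps (triangleValues a b N)) :
    SubtractiveEuclid a b d := by
  obtain ⟨hd, -, ⟨x, y, hxy, rfl⟩, ⟨x', y', hxy', hval⟩, hmin⟩ := h
  replace hmin (u v : ℕ) (huv : u + v ≤ N) := hmin _ ⟨u, v, huv, rfl⟩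
  rcases le_total x x' with hx | hx <;> obtain ⟨m, rfl⟩ := Nat.exists_eq_add_of_le hx <;>
    rcases le_total y y' with hy | hy <;> obtain ⟨n, rfl⟩ := Nat.exists_eq_add_of_le hy <;>
    push_cast at hval
  · refine subtractiveEuclid_of_forall_box_le (m := m) (n := n) hd (by linarith) ?_
    intro m' hm' n' hn' hpos
    have := hmin (x + m') (y + n') (by omega)
    push_cast at this
    linarith [this (by linarith)]
  · have hd_eq : d = a * m + b * n := by zify; linarith
    have hda (ha : 0 < a) (hm : 0 < m) : d ≤ a := by
      by_contra! hlt
      have := hmin (x + (m - 1)) y' (by omega)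
      push_cast [Nat.cast_sub hm] at this
      linarith [this (by linarith)]
    have hdb (hb : 0 < b) (hn : 0 < n) : d ≤ b := by
      have := hmin x (y' + (n - 1)) (by omega)
      push_cast [Nat.cast_sub hn] at this
      linarith [this (by linarith)]
    rcases eq_or_eq_of_eq_mul_add_mul hd hd_eq hda hdb with rfl | rfl
    exacts [.left d b, .right a d]
  · have : (0 : ℤ) ≤ a * m := by positivity
    have : (0 : ℤ) ≤ b * n := by positivity
    linarith
  · refine (subtractiveEuclid_of_forall_box_le (m := n) (n := m) hd (by linarith) ?_).symm
    intro n' hn' m' hm' hpos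
    by_contra! hlt
    have := hmin (x' + m') (y' + n') (by omega)
    push_cast at this
    linarith [this (by linarith)]

section UnimodularBasis

variable {a b α β A₁ A₂ C₁ C₂ : ℕ}

theorem mem_gaps_of_unimodular (hdet : A₁ * C₂ = A₂ * C₁ + 1) (hA : a * A₁ = b * A₂ + α)
    (hC : a * C₁ + β = b * C₂) (hα : 0 < α) : α ∈ gaps (triangleValues a b (A₁ + A₂)) := by
  have hC₂ : 0 < C₂ := Nat.pos_of_ne_zero (by rintro rfl; omega)
  zify at hdet hA hC
  refine ⟨hα, 0, ⟨0, 0, by simp⟩, ⟨A₁, A₂, le_rfl, by linarith⟩, ?_⟩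
  rintro _ ⟨x, y, hxy, rfl⟩ hpos
  -- `m` and `n` are the coordinates of `(x, y)` in the basis `(A₁, A₂), (C₁, C₂)`. Unless `1 ≤ m`
  -- and `n ≤ 0`, the value is nonpositive, or `x + y` is negative or exceeds `A₁ + A₂`.
  obtain ⟨m, hm⟩ : ∃ m : ℤ, m = C₂ * x - C₁ * y := ⟨_, rfl⟩
  obtain ⟨n, hn⟩ : ∃ n : ℤ, n = A₁ * y - A₂ * x := ⟨_, rfl⟩
  have hx : (x : ℤ) = m * A₁ + n * C₁ := by linear_combination -A₁ * hm - C₁ * hn - x * hdet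
  have hy : (y : ℤ) = m * A₂ + n * C₂ := by linear_combination -A₂ * hm - C₂ * hn - y * hdet
  have hval : (a * x - b * y : ℤ) = m * α - n * β := by
    linear_combination a * hx - b * hy + m * hA + n * hC
  have hnorm : m * (A₁ + A₂) + n * (C₁ + C₂) = x + y := by linarith
  have hxy' : (x + y : ℤ) ≤ A₁ + A₂ := by exact_mod_cast hxy
  rw [hval] at hpos
  have hm_pos : 1 ≤ m := by
    by_contra! hm0
    have hn_neg : n < 0 := by
      by_contra! hn0
      nlinarith
    nlinarith
  have hn_nonpos : n ≤ 0 := by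
    by_contra! hn_pos
    nlinarith
  rw [hval]
  nlinarith

theorem SubtractiveEuclid.exists_mem_gaps {d : ℕ} (h : SubtractiveEuclid α β d) (hd : 0 < d)
    (hdet : A₁ * C₂ = A₂ * C₁ + 1) (hA : a * A₁ = b * A₂ + α) (hC : a * C₁ + β = b * C₂) :
    ∃ N, d ∈ gaps (triangleValues a b N) := by
  induction h generalizing A₁ A₂ C₁ C₂ with
  | left => exact ⟨_, mem_gaps_of_unimodular hdet hA hC hd⟩
  | right =>
    refine ⟨C₂ + C₁, gaps_triangleValues_comm b a _ ▸ ?_⟩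
    exact mem_gaps_of_unimodular (A₁ := C₂) (C₂ := A₁) (by linarith) (by linarith) hA.symm hd
  | add_left _ ih =>
    exact ih (A₁ := A₁ + C₁) (A₂ := A₂ + C₂) hd (by linarith) (by linarith) hC
  | add_right _ ih =>
    exact ih (C₁ := A₁ + C₁) (C₂ := A₂ + C₂) hd (by linarith) hA (by linarith)

end UnimodularBasis

theorem iUnion_gaps_triangleValues (a b : ℕ) :
    ⋃ N, gaps (triangleValues a b N) = {d | SubtractiveEuclid a b d} \ {0} := by
  ext d
  rw [Set.mem_iUnion]
  constructor
  · rintro ⟨N, h⟩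
    exact ⟨subtractiveEuclid_of_mem_gaps h, h.1.ne'⟩
  · rintro ⟨h, hd⟩
    exact h.exists_mem_gaps (Nat.pos_of_ne_zero hd) (A₁ := 1) (A₂ := 0) (C₁ := 0) (C₂ := 1)
      (by simp) (by simp) (by simp)

theorem mod_eq_of_mul_add_mul_eq {s m b r u v : ℕ} (hsm : s.Coprime m) (hr : r < s)
    (h : b * m + s * u = r * m + s * v) : b % s = r := by
  have hmod : b * m ≡ r * m [MOD s] := by
    simpa [Nat.ModEq] using congrArg (· % s) h
  exact Nat.mod_eq_of_modEq (hmod.cancel_right_of_coprime hsm) hr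

section OneBetti

variable {s1 s2 s3 : ℕ}

theorem mem_zset_iff_exists (c12 : s1.Coprime s2) (c13 : s1.Coprime s3) (c23 : s2.Coprime s3)
    {r1 r2 r3 : ℕ} (h1 : r1 < s1) (h2 : r2 < s2) (h3 : r3 < s3) (N : ℕ) (z : ℕ × ℕ × ℕ) :
    z ∈ Zset (s2 * s3) (s1 * s3) (s1 * s2)
        (N * (s1 * s2 * s3) + r1 * (s2 * s3) + r2 * (s1 * s3) + r3 * (s1 * s2)) ↔
      ∃ x w y, x + w + y = N ∧ z = (s1 * x + r1, s2 * w + r2, s3 * y + r3) := by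
  obtain ⟨b1, b2, b3⟩ := z
  simp only [Zset, Set.mem_ofPred_eq, Prod.mk.injEq]
  constructor
  · intro h
    have hb1 : b1 % s1 = r1 := mod_eq_of_mul_add_mul_eq (c12.mul_right c13) h1
      (u := b2 * s3 + b3 * s2) (v := N * (s2 * s3) + r2 * s3 + r3 * s2) (by linarith)
    have hb2 : b2 % s2 = r2 := mod_eq_of_mul_add_mul_eq (c12.symm.mul_right c23) h2
      (u := b1 * s3 + b3 * s1) (v := N * (s1 * s3) + r1 * s3 + r3 * s1) (by linarith)
    have hb3 : b3 % s3 = r3 := mod_eq_of_mul_add_mul_eq (c13.symm.mul_right c23.symm) h3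
      (u := b1 * s2 + b2 * s1) (v := N * (s1 * s2) + r1 * s2 + r2 * s1) (by linarith)
    have e1 : b1 = s1 * (b1 / s1) + r1 := hb1 ▸ (Nat.div_add_mod b1 s1).symm
    have e2 : b2 = s2 * (b2 / s2) + r2 := hb2 ▸ (Nat.div_add_mod b2 s2).symm
    have e3 : b3 = s3 * (b3 / s3) + r3 := hb3 ▸ (Nat.div_add_mod b3 s3).symm
    refine ⟨b1 / s1, b2 / s2, b3 / s3, ?_, e1, e2, e3⟩
    have hpos : 0 < s1 * s2 * s3 := Nat.mul_pos (Nat.mul_pos h1.pos h2.pos) h3.pos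
    generalize b1 / s1 = x at *
    generalize b2 / s2 = w at *
    generalize b3 / s3 = y at *
    subst e1 e2 e3
    exact Nat.eq_of_mul_eq_mul_right hpos (by linarith)
  · rintro ⟨x, w, y, rfl, rfl, rfl, rfl⟩
    ring

theorem image_lset_eq_image_triangleValues (c12 : s1.Coprime s2) (c13 : s1.Coprime s3)
    (c23 : s2.Coprime s3) {r1 r2 r3 : ℕ} (h1 : r1 < s1) (h2 : r2 < s2) (h3 : r3 < s3) (N : ℕ) :
    ((↑) '' Lset (s2 * s3) (s1 * s3) (s1 * s2)
        (N * (s1 * s2 * s3) + r1 * (s2 * s3) + r2 * (s1 * s3) + r3 * (s1 * s2)) : Set ℤ) =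
      ((r1 + r2 + r3 + s2 * N : ℤ) + ·) '' triangleValues (s1 - s2) (s2 - s3) N := by
  ext t
  simp only [Lset, Set.mem_image, exists_exists_and_eq_and,
    mem_zset_iff_exists c12 c13 c23 h1 h2 h3]
  constructor
  · rintro ⟨_, ⟨x, w, y, rfl, rfl⟩, rfl⟩
    refine ⟨_, ⟨x, y, by omega, rfl⟩, ?_⟩
    push_cast [len]
    ring
  · rintro ⟨_, ⟨x, y, hxy, rfl⟩, rfl⟩
    obtain ⟨w, rfl⟩ := Nat.exists_eq_add_of_le hxy
    refine ⟨_, ⟨x, w, y, by omega, rfl⟩, ?_⟩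
    push_cast [len]
    ring

theorem deltaOf_eq_gaps_triangleValues (c12 : s1.Coprime s2) (c13 : s1.Coprime s3)
    (c23 : s2.Coprime s3) {r1 r2 r3 : ℕ} (h1 : r1 < s1) (h2 : r2 < s2) (h3 : r3 < s3) (N : ℕ) :
    DeltaOf (s2 * s3) (s1 * s3) (s1 * s2)
        (N * (s1 * s2 * s3) + r1 * (s2 * s3) + r2 * (s1 * s3) + r3 * (s1 * s2)) =
      gaps (triangleValues (s1 - s2) (s2 - s3) N) := by
  rw [deltaOf_eq_gaps, image_lset_eq_image_triangleValues c12 c13 c23 h1 h2 h3, gaps_image_add_left]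

theorem exists_eq_betti_mul_add_of_memS (p1 : 0 < s1) (p2 : 0 < s2) (p3 : 0 < s3) {s : ℕ}
    (hs : memS (s2 * s3) (s1 * s3) (s1 * s2) s) :
    ∃ N, ∃ r1 < s1, ∃ r2 < s2, ∃ r3 < s3,
      s = N * (s1 * s2 * s3) + r1 * (s2 * s3) + r2 * (s1 * s3) + r3 * (s1 * s2) := by
  obtain ⟨a1, a2, a3, rfl⟩ := hs
  refine ⟨a1 / s1 + a2 / s2 + a3 / s3, a1 % s1, Nat.mod_lt _ p1, a2 % s2, Nat.mod_lt _ p2,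
    a3 % s3, Nat.mod_lt _ p3, ?_⟩
  conv_lhs => rw [← Nat.div_add_mod a1 s1, ← Nat.div_add_mod a2 s2, ← Nat.div_add_mod a3 s3]
  ring

theorem deltaS_eq_iUnion_gaps (p1 : 0 < s1) (p2 : 0 < s2) (p3 : 0 < s3) (c12 : s1.Coprime s2)
    (c13 : s1.Coprime s3) (c23 : s2.Coprime s3) :
    DeltaS (s2 * s3) (s1 * s3) (s1 * s2) = ⋃ N, gaps (triangleValues (s1 - s2) (s2 - s3) N) := by
  ext d
  rw [Set.mem_iUnion]
  constructor
  · rintro ⟨s, hs, hd⟩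
    obtain ⟨N, r1, h1, r2, h2, r3, h3, rfl⟩ := exists_eq_betti_mul_add_of_memS p1 p2 p3 hs
    exact ⟨N, deltaOf_eq_gaps_triangleValues c12 c13 c23 h1 h2 h3 N ▸ hd⟩
  · rintro ⟨N, hd⟩
    refine ⟨_, ⟨N * s1, 0, 0, ?_⟩, deltaOf_eq_gaps_triangleValues c12 c13 c23 p1 p2 p3 N ▸ hd⟩
    ring

end OneBetti

/-- Theorem (one Betti element case): for pairwise coprime `s1 > s2 > s3 ≥ 2`, the Delta
set of the symmetric numerical semigroup `⟨s2*s3, s1*s3, s1*s2⟩` equals the Euclid set of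
`δ1 = s1 - s2` and `δ2 = s2 - s3`, minus zero. -/
theorem delta_eq_euclid_one_betti (s1 s2 s3 : ℕ) (h3 : 2 ≤ s3) (h32 : s3 < s2) (h21 : s2 < s1)
    (c12 : Nat.Coprime s1 s2) (c13 : Nat.Coprime s1 s3) (c23 : Nat.Coprime s2 s3) :
    DeltaS (s2 * s3) (s1 * s3) (s1 * s2) = Euc (s1 - s2) (s2 - s3) \ {0} := by
  have h3' : 0 < s3 := two_pos.trans_le h3
  rw [deltaS_eq_iUnion_gaps (by omega) (by omega) h3' c12 c13 c23, ← Nat.cast_sub h21.le,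
    ← Nat.cast_sub h32.le, iUnion_gaps_triangleValues]
  ext d
  rw [Set.mem_sdiff, Set.mem_sdiff, Set.mem_ofPred_eq,
    mem_euc_iff_subtractiveEuclid (Nat.sub_pos_of_lt h21) (Nat.sub_pos_of_lt h32)]
end

section
/- Let δ1, δ2 be positive integers with g = gcd(δ1,δ2), set η1 = max{δ1,δ2}, η2 = min{δ1,δ2}, and assume η2 does not divide η1, so η3 = η1 mod η2 > 0. Let x be a multiple of g with η3 ≤ x ≤ η1 and x ∉ D(η1,η2) ∪ D(η2,η3), and write x^(η1,η2) = (x1,x2) (so that x1 > 0 and x2 < 0). Then there exists an integer d ∈ D(η1,η2) with d < x such that d^(η1,η2) = (d1,d2) satisfies 0 < d1 < x1 and x2 < d2 < 0. -/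
/-! The witness is always `d = η₁ % η₂ = 1 * η₁ - ⌊η₁ / η₂⌋ * η₂`, the least element of `D(η₁, η₂)`.
Any `x < η₁ + η₂` represented with first coefficient `1` lies in `D(η₁, η₂)`, so `x ∉ D(η₁, η₂)`
forces `x₁ ≥ 2`. As soon as `x < η₁ + η₁ % η₂`, it follows that
`x₂ * η₂ ≤ x - 2 * η₁ < η₁ % η₂ - η₁ = -⌊η₁ / η₂⌋ * η₂`, hence `x₂ < -⌊η₁ / η₂⌋`. -/

theorem mem_Dset_iff_exists_add_mul_eq {u v lo x : ℕ} (hv : 0 < v) :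
    x ∈ Dset u v lo ↔ ∃ q, lo ≤ q ∧ x + q * v = u := by
  constructor
  · rintro ⟨q, hlo, hq, rfl⟩
    exact ⟨q, hlo, Nat.sub_add_cancel ((Nat.le_div_iff_mul_le hv).mp hq)⟩
  · rintro ⟨q, hlo, rfl⟩
    exact ⟨q, hlo, (Nat.le_div_iff_mul_le hv).mpr (Nat.le_add_left _ _),
      (Nat.add_sub_cancel _ _).symm⟩

theorem mod_mem_Dset {u v lo : ℕ} (hlo : lo ≤ u / v) : u % v ∈ Dset u v lo :=
  ⟨u / v, hlo, le_rfl, Nat.mod_eq_sub_div_mul⟩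

theorem mem_Dset_of_eq_add_mul {u v x : ℕ} {k : ℤ} (hv : 0 < v) (hx : (x : ℤ) = u + k * v)
    (hxlt : x < u + v) : x ∈ Dset u v 0 := by
  have hk : k ≤ 0 := by
    have hkv : k * v < 1 * v := by lia
    exact Int.lt_add_one_iff.mp (lt_of_mul_lt_mul_right hkv v.cast_nonneg)
  obtain ⟨q, rfl⟩ := Int.exists_eq_neg_ofNat hk
  refine (mem_Dset_iff_exists_add_mul_eq hv).mpr ⟨q, q.zero_le, ?_⟩
  zify
  rw [hx]
  ring

theorem one_lt_of_notMem_Dset {u v x : ℕ} {m n : ℤ} (hv : 0 < v) (hxlt : x < u + v)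
    (hxD : x ∉ Dset u v 0) (hx : (x : ℤ) = m * u + n * v) (hm : 0 < m) : 1 < m := by
  refine lt_of_le_of_ne hm fun hm1 => hxD (mem_Dset_of_eq_add_mul (k := n) hv ?_ hxlt)
  rw [hx, ← hm1, one_mul]

theorem lt_neg_ediv_of_mul_add_mul_lt {a b m n : ℤ} (ha : 0 ≤ a) (hb : 0 < b) (hm : 1 < m)
    (h : m * a + n * b < a + a % b) : n < -(a / b) := by
  have hma : 2 * a ≤ m * a := mul_le_mul_of_nonneg_right hm ha
  have hnb : n * b < -(a / b) * b :=
    calc n * b < a % b - a := by linarith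
      _ = -(a / b) * b := by linarith [Int.ediv_mul_add_emod a b]
  exact lt_of_mul_lt_mul_right hnb hb.le

theorem exists_basement_unprimed_general {a b x : ℕ} {x1 x2 : ℤ} (hb : 0 < b) (hba : b ≤ a)
    (hxlo : a % b ≤ x) (hxhi : x < a + a % b) (hxD : x ∉ Dset a b 0)
    (hx : (x : ℤ) = x1 * a + x2 * b) (hx1 : 0 < x1) :
    ∃ d : ℕ, d ∈ Dset a b 0 ∧ d < x ∧
      ∃ d1 d2 : ℤ, (d : ℤ) = d1 * a + d2 * b ∧ 0 < d1 ∧ d1 < x1 ∧ x2 < d2 ∧ d2 < 0 := by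
  have hmem : a % b ∈ Dset a b 0 := mod_mem_Dset (Nat.zero_le _)
  have hlt : a % b < x := lt_of_le_of_ne hxlo fun h => hxD (h ▸ hmem)
  have hxab : x < a + b := hxhi.trans (Nat.add_lt_add_left (Nat.mod_lt a hb) a)
  have hone_lt : 1 < x1 := one_lt_of_notMem_Dset hb hxab hxD hx hx1
  have hrep : ((a % b : ℕ) : ℤ) = 1 * a + -(a / b : ℤ) * b := by
    push_cast
    linarith [Int.ediv_mul_add_emod a b]
  have hx2 : x2 < -(a / b : ℤ) :=
    lt_neg_ediv_of_mul_add_mul_lt a.cast_nonneg (mod_cast hb) hone_lt (hx ▸ mod_cast hxhi)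
  have hneg : -(a / b : ℤ) < 0 := neg_lt_zero.mpr (mod_cast Nat.div_pos hba hb)
  exact ⟨a % b, hmem, hlt, 1, -(a / b : ℤ), hrep, one_pos, hone_lt, hx2, hneg⟩

/-- For `x` a multiple of `g` with `η3 ≤ x ≤ η1`, `x ∉ D(η1,η2) ∪ D(η2,η3)`, and
canonical representation `x = x1*η1 + x2*η2` with `0 < x1 ≤ η2/g`, `-η1/g < x2 ≤ 0`,
there is `d ∈ D(η1,η2)` with `d < x` whose canonical representation `(d1,d2)` satisfies
`0 < d1 < x1` and `x2 < d2 < 0`. -/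
theorem exists_basement_unprimed (δ1 δ2 : ℕ) (h1 : 0 < δ1) (h2 : 0 < δ2)
    (hnd : ¬ (min δ1 δ2 ∣ max δ1 δ2)) (x : ℕ) (hdvd : Nat.gcd δ1 δ2 ∣ x)
    (hxlo : (max δ1 δ2 % min δ1 δ2) ≤ x) (hxhi : x ≤ max δ1 δ2)
    (hxnot : x ∉ Dset (max δ1 δ2) (min δ1 δ2) 0 ∪ Dset (min δ1 δ2) (max δ1 δ2 % min δ1 δ2) 0)
    (x1 x2 : ℤ)
    (hrep : (x : ℤ) = x1 * (max δ1 δ2) + x2 * (min δ1 δ2) ∧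
        0 < x1 ∧ x1 ≤ ((min δ1 δ2 / Nat.gcd δ1 δ2 : ℕ) : ℤ) ∧ -((max δ1 δ2 / Nat.gcd δ1 δ2 : ℕ) : ℤ) < x2 ∧ x2 ≤ 0) :
    ∃ d : ℕ, d ∈ Dset (max δ1 δ2) (min δ1 δ2) 0 ∧ d < x ∧
      ∃ d1 d2 : ℤ, (d : ℤ) = d1 * (max δ1 δ2) + d2 * (min δ1 δ2) ∧
        0 < d1 ∧ d1 < x1 ∧ x2 < d2 ∧ d2 < 0 :=
  exists_basement_unprimed_general (lt_min h1 h2) min_le_max hxlo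
    (lt_add_of_le_of_pos hxhi (Nat.emod_pos_of_not_dvd hnd)) (fun h => hxnot (Or.inl h))
    hrep.1 hrep.2.1
end

section
/- Let δ1, δ2 be positive integers with g = gcd(δ1,δ2), set η1 = max{δ1,δ2}, η2 = min{δ1,δ2}, and assume η2 does not divide η1, so η3 = η1 mod η2 > 0. Let x be a multiple of g with η3 ≤ x ≤ η1 and x ∉ D(η1,η2) ∪ D(η2,η3), and write x'^(η1,η2) = (x1',x2') (so that x1' ≤ 0 and x2' > 0). Then there exists an integer d ∈ D(η2,η3) with d < x such that d'^(η1,η2) = (d1',d2') satisfies x1' ≤ d1' ≤ 0 and 0 < d2' < x2'; moreover d1' = 0 occurs only when x is a multiple of η2. -/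
/-!
Write `η3 = η1 % η2`. Trading `η1` for `η3` turns a representation `x = -p * η1 + x2' * η2` into
`x = n * η2 - p * η3` with `n = x2' - p * (η1 / η2)`. Here `n ≥ 1` as `x > 0`, and `n ≠ 1` as
`x ∉ D(η2, η3)`. The element `d = η2 - q * η3` with `q = min p (η2 / η3)` then works: if `q = p` it
lies below `x` because `n > 1`, and otherwise it is `η2 % η3`, the least element of `D(η2, η3)`.
-/

theorem mem_Dset_iff {u v lo y : ℕ} (hv : 0 < v) :
    y ∈ Dset u v lo ↔ ∃ q : ℕ, lo ≤ q ∧ y + q * v = u := by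
  refine exists_congr fun q => and_congr_right fun _ => ?_
  rw [Nat.le_div_iff_mul_le hv]
  omega

theorem mul_add_mul_eq_mul_emod_add_mul (a b m n : ℤ) :
    m * a + n * b = m * (a % b) + (n + m * (a / b)) * b := by
  rw [Int.emod_def]
  ring

section

variable {b c x p : ℕ} {n : ℤ}

theorem one_lt_of_eq_of_notMem_Dset (hc : 0 < c) (hx : 0 < x) (hrep : (x : ℤ) + p * c = n * b)
    (hxnot : x ∉ Dset b c 0) : 1 < n := by
  have n_pos : 0 < n := by
    have : 0 < n * b := by rw [← hrep]; positivity
    exact pos_of_mul_pos_left this (Int.natCast_nonneg b)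
  have n_ne_one : n ≠ 1 := by
    rintro rfl
    rw [one_mul] at hrep
    exact hxnot ((mem_Dset_iff hc).2 ⟨p, p.zero_le, mod_cast hrep⟩)
  omega

theorem exists_add_mul_eq_and_lt (hc : 0 < c) (hcb : c ≤ b) (hx : b % c < x) (hn : 1 < n)
    (hrep : (x : ℤ) + p * c = n * b) :
    ∃ d q : ℕ, d + q * c = b ∧ d < x ∧ q ≤ p ∧ (q = 0 → p = 0) := by
  rcases le_or_gt p (b / c) with hp | hp
  · obtain ⟨d, hd⟩ := Nat.exists_eq_add_of_le' ((Nat.le_div_iff_mul_le hc).1 hp)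
    have b_lt : (b : ℤ) < n * b := lt_mul_of_one_lt_left (by omega) hn
    exact ⟨d, p, hd.symm, by zify at hd ⊢; linarith, le_rfl, id⟩
  · have quot_pos : 0 < b / c := Nat.div_pos hcb hc
    exact ⟨b % c, b / c, Nat.mod_add_div' b c, hx, hp.le, by omega⟩

end

theorem exists_basement_primed_general {a b x : ℕ} (hb : 0 < b) (hnd : ¬ b ∣ a)
    (hx : b % (a % b) < x) (hxnot : x ∉ Dset b (a % b) 0) {x1 x2 : ℤ}
    (hrep : (x : ℤ) = x1 * a + x2 * b) (hx1 : x1 ≤ 0) :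
    ∃ d ∈ Dset b (a % b) 0, d < x ∧ ∃ d1 d2 : ℤ, (d : ℤ) = d1 * a + d2 * b ∧
      x1 ≤ d1 ∧ d1 ≤ 0 ∧ 0 < d2 ∧ d2 < x2 ∧ (d1 = 0 → b ∣ x) := by
  have mod_pos : 0 < a % b := Nat.emod_pos_of_not_dvd hnd
  obtain ⟨p, rfl⟩ := Int.exists_eq_neg_ofNat hx1
  have hrep_mod : (x : ℤ) + p * (a % b : ℕ) = (x2 + -p * (a / b : ℕ)) * b := by
    rw [hrep, mul_add_mul_eq_mul_emod_add_mul]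
    push_cast
    ring
  have one_lt := one_lt_of_eq_of_notMem_Dset mod_pos (by omega) hrep_mod hxnot
  obtain ⟨d, q, hd, hdx, hqp, hq⟩ :=
    exists_add_mul_eq_and_lt mod_pos (Nat.mod_lt a hb).le hx one_lt hrep_mod
  have quot_mul_le : (q : ℤ) * (a / b : ℕ) ≤ p * (a / b : ℕ) := by gcongr
  refine ⟨d, (mem_Dset_iff mod_pos).2 ⟨q, q.zero_le, hd⟩, hdx, -q, 1 + q * (a / b : ℕ), ?_,
    by omega, by omega, by positivity, by linarith, fun hq0 => ?_⟩
  · rw [mul_add_mul_eq_mul_emod_add_mul]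
    zify at hd
    push_cast
    linarith
  · obtain rfl : p = 0 := hq (by omega)
    exact Int.natCast_dvd_natCast.1 ⟨x2, by rw [hrep]; push_cast; ring⟩

/-- For `x` a multiple of `g` with `η3 ≤ x ≤ η1`, `x ∉ D(η1,η2) ∪ D(η2,η3)`, and primed
representation `x = x1'*η1 + x2'*η2` with `-η2/g < x1' ≤ 0`, `0 < x2' ≤ η1/g`, there is
`d ∈ D(η2,η3)` with `d < x` whose primed representation `(d1',d2')` satisfies
`x1' ≤ d1' ≤ 0` and `0 < d2' < x2'`; and `d1' = 0` only when `η2 ∣ x`. -/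
theorem exists_basement_primed (δ1 δ2 : ℕ) (h1 : 0 < δ1) (h2 : 0 < δ2)
    (hnd : ¬ (min δ1 δ2 ∣ max δ1 δ2)) (x : ℕ) (hdvd : Nat.gcd δ1 δ2 ∣ x)
    (hxlo : (max δ1 δ2 % min δ1 δ2) ≤ x) (hxhi : x ≤ max δ1 δ2)
    (hxnot : x ∉ Dset (max δ1 δ2) (min δ1 δ2) 0 ∪ Dset (min δ1 δ2) (max δ1 δ2 % min δ1 δ2) 0)
    (x1' x2' : ℤ)
    (hrep : (x : ℤ) = x1' * (max δ1 δ2) + x2' * (min δ1 δ2) ∧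
        -((min δ1 δ2 / Nat.gcd δ1 δ2 : ℕ) : ℤ) < x1' ∧ x1' ≤ 0 ∧ 0 < x2' ∧ x2' ≤ ((max δ1 δ2 / Nat.gcd δ1 δ2 : ℕ) : ℤ)) :
    ∃ d : ℕ, d ∈ Dset (min δ1 δ2) (max δ1 δ2 % min δ1 δ2) 0 ∧ d < x ∧
      ∃ d1' d2' : ℤ, (d : ℤ) = d1' * (max δ1 δ2) + d2' * (min δ1 δ2) ∧
        x1' ≤ d1' ∧ d1' ≤ 0 ∧ 0 < d2' ∧ d2' < x2' ∧
        (d1' = 0 → min δ1 δ2 ∣ x) := by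
  have hmod : 0 < max δ1 δ2 % min δ1 δ2 := Nat.emod_pos_of_not_dvd hnd
  exact mod_cast exists_basement_primed_general (lt_min h1 h2) hnd
    ((Nat.mod_lt _ hmod).trans_le hxlo) (fun h => hxnot (.inr h)) (mod_cast hrep.1) hrep.2.2.1
end

section
/- Let s1 > s2 > s3 ≥ 2 be pairwise coprime positive integers and let S be the numerical semigroup generated by n1 = s2*s3, n2 = s1*s3, n3 = s1*s2. Then the maximum of Δ(S) equals max{s1 − s2, s2 − s3}; that is, max{s1 − s2, s2 − s3} ∈ Δ(S) and every element of Δ(S) is at most max{s1 − s2, s2 − s3}. -/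
/-!
Any two factorizations of an element differ by a vector `(-s1 * (b + c), s2 * b, s3 * c)` with
integers `b` and `c`. Trading `s3` copies of the third generator for `s2` copies of the second, or
`s2` copies of the second for `s1` copies of the first, lengthens a factorization by `s2 - s3` or
`s1 - s2`, and a factorization allowing neither trade has maximal length; hence no gap exceeds the
larger of the two. The Betti element `s1 * s2 * s3` has lengths exactly `s1`, `s2`, `s3`, so both
gaps occur.
-/

section LengthSets

variable {n1 n2 n3 s d : ℕ}

theorem mem_Zset_iff {x y z : ℕ} :
    (x, y, z) ∈ Zset n1 n2 n3 s ↔ x * n1 + y * n2 + z * n3 = s :=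
  Iff.rfl

theorem mem_Lset_iff {l : ℕ} :
    l ∈ Lset n1 n2 n3 s ↔ ∃ x y z, (x, y, z) ∈ Zset n1 n2 n3 s ∧ x + y + z = l := by
  simp only [Lset, Set.mem_image, Prod.exists, len]

theorem mem_DeltaS_iff : d ∈ DeltaS n1 n2 n3 ↔ ∃ s, d ∈ DeltaOf n1 n2 n3 s := by
  refine ⟨fun ⟨s, _, hd⟩ => ⟨s, hd⟩, fun ⟨s, hd⟩ => ⟨s, ?_, hd⟩⟩
  obtain ⟨l, _, hl, _⟩ := hd
  obtain ⟨x, y, z, hxyz, _⟩ := mem_Lset_iff.mp hl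
  exact ⟨x, y, z, hxyz⟩

theorem le_of_mem_DeltaOf {m : ℕ}
    (hstep : ∀ l' ∈ Lset n1 n2 n3 s, ∀ l ∈ Lset n1 n2 n3 s, l' < l →
      ∃ t ∈ Lset n1 n2 n3 s, l' < t ∧ t ≤ l' + m)
    (hd : d ∈ DeltaOf n1 n2 n3 s) : d ≤ m := by
  obtain ⟨l, l', hl, hl', hlt, rfl, hgap⟩ := hd
  obtain ⟨t, ht, hlt', htm⟩ := hstep l' hl' l hl hlt
  have hlet : l ≤ t := not_lt.mp fun h => hgap t ht ⟨hlt', h⟩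
  omega

theorem max_sub_sub_mem_DeltaOf_of_Lset_eq {l1 l2 l3 : ℕ} (hL : Lset n1 n2 n3 s = {l1, l2, l3})
    (h32 : l3 < l2) (h21 : l2 < l1) : max (l1 - l2) (l2 - l3) ∈ DeltaOf n1 n2 n3 s := by
  simp only [DeltaOf, hL, Set.mem_insert_iff, Set.mem_singleton_iff, Set.mem_ofPred_eq]
  rcases max_choice (l1 - l2) (l2 - l3) with hmax | hmax
  · exact ⟨l1, l2, by simp, by simp, h21, hmax, by omega⟩
  · exact ⟨l2, l3, by simp, by simp, h32, hmax, by omega⟩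

end LengthSets

theorem exists_eq_mul_of_mul_add_mul_add_mul_eq_zero {R : Type*} [CommRing R] [IsDomain R]
    {p q r x y z : R} (hq : q ≠ 0) (hr : r ≠ 0)
    (hpq : IsCoprime p q) (hpr : IsCoprime p r) (hqr : IsCoprime q r)
    (h : x * (q * r) + y * (p * r) + z * (p * q) = 0) :
    ∃ b c, x = -(p * (b + c)) ∧ y = q * b ∧ z = r * c := by
  have hqy : q ∣ y := (hpq.symm.mul_right hqr).dvd_of_dvd_mul_right
    ⟨-(x * r + z * p), by linear_combination h⟩
  have hrz : r ∣ z := (hpr.symm.mul_right hqr.symm).dvd_of_dvd_mul_right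
    ⟨-(x * q + y * p), by linear_combination h⟩
  obtain ⟨b, rfl⟩ := hqy
  obtain ⟨c, rfl⟩ := hrz
  refine ⟨b, c, mul_right_cancel₀ (mul_ne_zero hq hr) ?_, rfl, rfl⟩
  linear_combination h

section OneBetti

variable {s1 s2 s3 s x y z x' y' z' : ℕ}

theorem add_snd_mem_Zset_iff_add_fst_mem_Zset :
    (x, y + s2, z) ∈ Zset (s2 * s3) (s1 * s3) (s1 * s2) s ↔
      (x + s1, y, z) ∈ Zset (s2 * s3) (s1 * s3) (s1 * s2) s := by
  rw [mem_Zset_iff, mem_Zset_iff]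
  ring_nf

theorem add_thd_mem_Zset_iff_add_snd_mem_Zset :
    (x, y, z + s3) ∈ Zset (s2 * s3) (s1 * s3) (s1 * s2) s ↔
      (x, y + s2, z) ∈ Zset (s2 * s3) (s1 * s3) (s1 * s2) s := by
  rw [mem_Zset_iff, mem_Zset_iff]
  ring_nf

theorem exists_sub_eq_of_mem_Zset (hs2 : 0 < s2) (hs3 : 0 < s3)
    (c12 : s1.Coprime s2) (c13 : s1.Coprime s3) (c23 : s2.Coprime s3)
    (h : (x, y, z) ∈ Zset (s2 * s3) (s1 * s3) (s1 * s2) s)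
    (h' : (x', y', z') ∈ Zset (s2 * s3) (s1 * s3) (s1 * s2) s) :
    ∃ b c : ℤ, (x' - x : ℤ) = -(s1 * (b + c)) ∧ (y' - y : ℤ) = s2 * b ∧
      (z' - z : ℤ) = s3 * c := by
  rw [mem_Zset_iff] at h h'
  zify at h h'
  exact exists_eq_mul_of_mul_add_mul_add_mul_eq_zero (mod_cast hs2.ne') (mod_cast hs3.ne')
    c12.isCoprime c13.isCoprime c23.isCoprime (by linear_combination h' - h)

theorem nonneg_of_natCast_sub_eq_mul {m k k' : ℕ} {b : ℤ} (hk : k < m)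
    (h : (k' - k : ℤ) = m * b) : 0 ≤ b := by
  have hlt : (m : ℤ) * (-1) < m * b := by omega
  exact Int.add_one_le_of_lt (lt_of_mul_lt_mul_left hlt m.cast_nonneg)

theorem add_add_le_of_mem_Zset_of_lt (h21 : s2 ≤ s1) (h31 : s3 ≤ s1)
    (c12 : s1.Coprime s2) (c13 : s1.Coprime s3) (c23 : s2.Coprime s3)
    (h : (x, y, z) ∈ Zset (s2 * s3) (s1 * s3) (s1 * s2) s) (hy : y < s2) (hz : z < s3)
    (h' : (x', y', z') ∈ Zset (s2 * s3) (s1 * s3) (s1 * s2) s) :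
    x' + y' + z' ≤ x + y + z := by
  obtain ⟨b, c, hx', hy', hz'⟩ :=
    exists_sub_eq_of_mem_Zset (Nat.zero_lt_of_lt hy) (Nat.zero_lt_of_lt hz) c12 c13 c23 h h'
  have hb : (s2 : ℤ) * b ≤ s1 * b :=
    mul_le_mul_of_nonneg_right (mod_cast h21) (nonneg_of_natCast_sub_eq_mul hy hy')
  have hc : (s3 : ℤ) * c ≤ s1 * c :=
    mul_le_mul_of_nonneg_right (mod_cast h31) (nonneg_of_natCast_sub_eq_mul hz hz')
  zify
  linarith

theorem exists_mem_Lset_lt_le_add_max (h32 : s3 < s2) (h21 : s2 < s1)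
    (c12 : s1.Coprime s2) (c13 : s1.Coprime s3) (c23 : s2.Coprime s3) {l l' : ℕ}
    (hl' : l' ∈ Lset (s2 * s3) (s1 * s3) (s1 * s2) s)
    (hl : l ∈ Lset (s2 * s3) (s1 * s3) (s1 * s2) s) (hlt : l' < l) :
    ∃ t ∈ Lset (s2 * s3) (s1 * s3) (s1 * s2) s,
      l' < t ∧ t ≤ l' + max (s1 - s2) (s2 - s3) := by
  simp only [mem_Lset_iff] at hl hl' ⊢
  obtain ⟨x', y', z', h', rfl⟩ := hl
  obtain ⟨x, y, z, h, rfl⟩ := hl'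
  rcases le_or_gt s2 y with hy | hy
  · obtain ⟨y, rfl⟩ := Nat.exists_eq_add_of_le' hy
    exact ⟨_, ⟨x + s1, y, z, add_snd_mem_Zset_iff_add_fst_mem_Zset.mp h, rfl⟩,
      by omega, by omega⟩
  rcases le_or_gt s3 z with hz | hz
  · obtain ⟨z, rfl⟩ := Nat.exists_eq_add_of_le' hz
    exact ⟨_, ⟨x, y + s2, z, add_thd_mem_Zset_iff_add_snd_mem_Zset.mp h, rfl⟩,
      by omega, by omega⟩
  · exact absurd hlt (add_add_le_of_mem_Zset_of_lt h21.le (h32.trans h21).le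
      c12 c13 c23 h hy hz h').not_gt

theorem mem_Zset_mul_mul_iff (hs1 : 0 < s1) (hs2 : 0 < s2) (hs3 : 0 < s3)
    (c12 : s1.Coprime s2) (c13 : s1.Coprime s3) (c23 : s2.Coprime s3) :
    (x, y, z) ∈ Zset (s2 * s3) (s1 * s3) (s1 * s2) (s1 * s2 * s3) ↔
      (x, y, z) = (s1, 0, 0) ∨ (x, y, z) = (0, s2, 0) ∨ (x, y, z) = (0, 0, s3) := by
  have hfst : (s1, 0, 0) ∈ Zset (s2 * s3) (s1 * s3) (s1 * s2) (s1 * s2 * s3) :=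
    mem_Zset_iff.mpr (by ring)
  constructor
  · intro h
    obtain ⟨b, c, hx, hy, hz⟩ := exists_sub_eq_of_mem_Zset hs2 hs3 c12 c13 c23 hfst h
    have hb : 0 ≤ b := nonneg_of_natCast_sub_eq_mul hs2 hy
    have hc : 0 ≤ c := nonneg_of_natCast_sub_eq_mul hs3 hz
    have hbc : b + c ≤ 1 := by
      refine le_of_mul_le_mul_left ?_ (Int.natCast_pos.mpr hs1)
      omega
    obtain ⟨rfl, rfl⟩ | ⟨rfl, rfl⟩ | ⟨rfl, rfl⟩ :
        b = 0 ∧ c = 0 ∨ b = 1 ∧ c = 0 ∨ b = 0 ∧ c = 1 := by omega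
    all_goals simp only [Prod.mk.injEq]; omega
  · simp only [Prod.mk.injEq, mem_Zset_iff]
    rintro (⟨rfl, rfl, rfl⟩ | ⟨rfl, rfl, rfl⟩ | ⟨rfl, rfl, rfl⟩) <;> ring

theorem Lset_mul_mul (hs1 : 0 < s1) (hs2 : 0 < s2) (hs3 : 0 < s3)
    (c12 : s1.Coprime s2) (c13 : s1.Coprime s3) (c23 : s2.Coprime s3) :
    Lset (s2 * s3) (s1 * s3) (s1 * s2) (s1 * s2 * s3) = {s1, s2, s3} := by
  ext l
  simp only [mem_Lset_iff, mem_Zset_mul_mul_iff hs1 hs2 hs3 c12 c13 c23, Prod.mk.injEq,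
    Set.mem_insert_iff, Set.mem_singleton_iff]
  constructor
  · rintro ⟨x, y, z, hxyz, rfl⟩
    omega
  · rintro (rfl | rfl | rfl)
    · exact ⟨l, 0, 0, by simp⟩
    · exact ⟨0, l, 0, by simp⟩
    · exact ⟨0, 0, l, by simp⟩

end OneBetti

/-- The maximum of the Delta set of `⟨s2*s3, s1*s3, s1*s2⟩` is `max(s1-s2, s2-s3)`. -/
theorem max_delta_one_betti (s1 s2 s3 : ℕ) (h3 : 2 ≤ s3) (h32 : s3 < s2) (h21 : s2 < s1)
    (c12 : Nat.Coprime s1 s2) (c13 : Nat.Coprime s1 s3) (c23 : Nat.Coprime s2 s3) :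
    max (s1 - s2) (s2 - s3) ∈ DeltaS (s2 * s3) (s1 * s3) (s1 * s2) ∧
    ∀ d ∈ DeltaS (s2 * s3) (s1 * s3) (s1 * s2), d ≤ max (s1 - s2) (s2 - s3) := by
  have hs3 : 0 < s3 := by omega
  have hs2 : 0 < s2 := hs3.trans h32
  have hs1 : 0 < s1 := hs2.trans h21
  refine ⟨mem_DeltaS_iff.mpr ⟨s1 * s2 * s3, ?_⟩, fun d hd => ?_⟩
  · exact max_sub_sub_mem_DeltaOf_of_Lset_eq (Lset_mul_mul hs1 hs2 hs3 c12 c13 c23) h32 h21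
  · obtain ⟨s, hd⟩ := mem_DeltaS_iff.mp hd
    exact le_of_mem_DeltaOf
      (fun _ hl' _ hl => exists_mem_Lset_lt_le_add_max h32 h21 c12 c13 c23 hl' hl) hd
end

section
/- Let s1 > s2 > s3 ≥ 2 be pairwise coprime positive integers and let S be the numerical semigroup generated by n1 = s2*s3, n2 = s1*s3, n3 = s1*s2. Then the minimum of Δ(S) equals gcd(s1 − s2, s2 − s3); that is, gcd(s1 − s2, s2 − s3) ∈ Δ(S) and every element of Δ(S) is at least gcd(s1 − s2, s2 − s3). -/
/-!
Let `g = gcd (s1 - s2, s2 - s3)`. Modulo `g` all three generators are congruent to `s1 ^ 2`, which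
is a unit there, so an element determines the length of its factorizations modulo `g` and no gap
between lengths is smaller than `g`. Conversely `s1 * s2 * s3` is `s1` times the first generator,
`s2` times the second and `s3` times the third; exchanging these representations inside a large
multiple of `s1 * s2 * s3` changes the length by any prescribed integer combination of `s1 - s2`
and `s2 - s3`, in particular by `g`.
-/

section Lengths

variable {n1 n2 n3 s l l' g : ℕ}

lemma memS_of_mem_lset (hl : l ∈ Lset n1 n2 n3 s) : memS n1 n2 n3 s := by
  obtain ⟨⟨a1, a2, a3⟩, hz, -⟩ := hl
  exact ⟨a1, a2, a3, hz⟩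

lemma length_mul_modEq_of_mem_lset {n : ℕ} (h1 : n1 ≡ n [MOD g]) (h2 : n2 ≡ n [MOD g])
    (h3 : n3 ≡ n [MOD g]) (hl : l ∈ Lset n1 n2 n3 s) : l * n ≡ s [MOD g] := by
  obtain ⟨⟨a1, a2, a3⟩, rfl, rfl⟩ := hl
  calc (a1 + a2 + a3) * n = a1 * n + a2 * n + a3 * n := by ring
    _ ≡ a1 * n1 + a2 * n2 + a3 * n3 [MOD g] :=
      ((h1.symm.mul_left a1).add (h2.symm.mul_left a2)).add (h3.symm.mul_left a3)

lemma length_modEq_length {n : ℕ} (hgn : Nat.Coprime g n) (h1 : n1 ≡ n [MOD g])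
    (h2 : n2 ≡ n [MOD g]) (h3 : n3 ≡ n [MOD g]) (hl : l ∈ Lset n1 n2 n3 s)
    (hl' : l' ∈ Lset n1 n2 n3 s) : l ≡ l' [MOD g] :=
  Nat.ModEq.cancel_right_of_coprime hgn <|
    (length_mul_modEq_of_mem_lset h1 h2 h3 hl).trans
      (length_mul_modEq_of_mem_lset h1 h2 h3 hl').symm

lemma isLeast_deltaS_of_modEq (hg : 0 < g)
    (hmod : ∀ ⦃s l l'⦄, l ∈ Lset n1 n2 n3 s → l' ∈ Lset n1 n2 n3 s → l ≡ l' [MOD g])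
    (hl : l ∈ Lset n1 n2 n3 s) (hlg : l + g ∈ Lset n1 n2 n3 s) :
    IsLeast (DeltaS n1 n2 n3) g := by
  have gap_ge : ∀ ⦃s l l'⦄, l ∈ Lset n1 n2 n3 s → l' ∈ Lset n1 n2 n3 s → l' < l → l' + g ≤ l :=
    fun _ _ _ hl hl' hlt => (hmod hl' hl).add_le_of_lt hlt
  constructor
  · refine ⟨s, memS_of_mem_lset hl, l + g, l, hlg, hl, by omega, by omega, ?_⟩
    rintro t ht ⟨hlt, htg⟩
    exact htg.not_ge (gap_ge ht hl hlt)
  · rintro d ⟨s, -, l, l', hl, hl', hlt, rfl, -⟩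
    exact Nat.le_sub_of_add_le' (gap_ge hl hl' hlt)

end Lengths

lemma coprime_left_of_modEq {a b c g : ℕ} (hab : a ≡ b [MOD g]) (hac : a ≡ c [MOD g])
    (h : Nat.Coprime a (Nat.gcd b c)) : Nat.Coprime g a := by
  have hg : Nat.gcd g a ∣ g := Nat.gcd_dvd_left g a
  have ha : Nat.gcd g a ∣ a := Nat.gcd_dvd_right g a
  exact Nat.eq_one_of_dvd_coprimes h ha
    (Nat.dvd_gcd ((hab.dvd_iff hg).mp ha) ((hac.dvd_iff hg).mp ha))

section OneBetti

variable {s1 s2 s3 : ℕ}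

lemma oneBetti_length_modEq_length {g : ℕ} (h12 : s1 ≡ s2 [MOD g]) (h13 : s1 ≡ s3 [MOD g])
    (hcop : Nat.Coprime s1 (Nat.gcd s2 s3)) {s l l' : ℕ}
    (hl : l ∈ Lset (s2 * s3) (s1 * s3) (s1 * s2) s)
    (hl' : l' ∈ Lset (s2 * s3) (s1 * s3) (s1 * s2) s) : l ≡ l' [MOD g] := by
  have hg : Nat.Coprime g s1 := coprime_left_of_modEq h12 h13 hcop
  exact length_modEq_length (hg.mul_right hg) (h12.symm.mul h13.symm)
    (h13.symm.mul_left s1) (h12.symm.mul_left s1) hl hl'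

lemma oneBetti_weighted_sum_mem_lset (k1 k2 k3 : ℕ) :
    k1 * s1 + k2 * s2 + k3 * s3 ∈
      Lset (s2 * s3) (s1 * s3) (s1 * s2) ((k1 + k2 + k3) * (s1 * s2 * s3)) := by
  refine ⟨(k1 * s1, k2 * s2, k3 * s3), ?_, rfl⟩
  simp only [Zset, Set.mem_ofPred_eq]
  ring

lemma oneBetti_exists_length_add_mem_lset {g : ℕ} {a b : ℤ}
    (hg : (g : ℤ) = (s1 - s2) * a + (s2 - s3) * b) :
    ∃ s l, l ∈ Lset (s2 * s3) (s1 * s3) (s1 * s2) s ∧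
      l + g ∈ Lset (s2 * s3) (s1 * s3) (s1 * s2) s := by
  -- `K` is large enough for the shifted coefficients `K + a`, `K - a + b`, `K - b` to be natural.
  let K : ℕ := a.natAbs + b.natAbs
  obtain ⟨k1, hk1⟩ := Int.eq_ofNat_of_zero_le (a := K + a) (by omega)
  obtain ⟨k2, hk2⟩ := Int.eq_ofNat_of_zero_le (a := K - a + b) (by omega)
  obtain ⟨k3, hk3⟩ := Int.eq_ofNat_of_zero_le (a := K - b) (by omega)
  have sum_eq : k1 + k2 + k3 = K + K + K := by omega
  have length_eq : k1 * s1 + k2 * s2 + k3 * s3 = K * s1 + K * s2 + K * s3 + g := by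
    zify
    rw [← hk1, ← hk2, ← hk3, hg]
    ring
  refine ⟨_, _, oneBetti_weighted_sum_mem_lset K K K, ?_⟩
  rw [← length_eq, ← sum_eq]
  exact oneBetti_weighted_sum_mem_lset k1 k2 k3

end OneBetti

theorem min_delta_one_betti_general {s1 s2 s3 : ℕ} (hne : s1 ≠ s2 ∨ s2 ≠ s3)
    (hcop : Nat.Coprime s1 (Nat.gcd s2 s3)) :
    IsLeast (DeltaS (s2 * s3) (s1 * s3) (s1 * s2)) (Int.gcd (s1 - s2) (s2 - s3)) := by
  have hpos : 0 < Int.gcd (s1 - s2) (s2 - s3) := by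
    rw [Int.gcd_pos_iff]
    omega
  have h12 : s1 ≡ s2 [MOD Int.gcd (s1 - s2) (s2 - s3)] :=
    (Nat.modEq_iff_dvd.mpr (Int.gcd_dvd_left ..)).symm
  have h23 : s2 ≡ s3 [MOD Int.gcd (s1 - s2) (s2 - s3)] :=
    (Nat.modEq_iff_dvd.mpr (Int.gcd_dvd_right ..)).symm
  obtain ⟨s, l, hl, hlg⟩ :=
    oneBetti_exists_length_add_mem_lset (Int.gcd_eq_gcd_ab (s1 - s2) (s2 - s3))
  exact isLeast_deltaS_of_modEq hpos
    (fun _ _ _ => oneBetti_length_modEq_length h12 (h12.trans h23) hcop) hl hlg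

/-- The minimum of the Delta set of `⟨s2*s3, s1*s3, s1*s2⟩` is `gcd(s1-s2, s2-s3)`. -/
theorem min_delta_one_betti (s1 s2 s3 : ℕ) (h3 : 2 ≤ s3) (h32 : s3 < s2) (h21 : s2 < s1)
    (c12 : Nat.Coprime s1 s2) (c13 : Nat.Coprime s1 s3) (c23 : Nat.Coprime s2 s3) :
    Nat.gcd (s1 - s2) (s2 - s3) ∈ DeltaS (s2 * s3) (s1 * s3) (s1 * s2) ∧
    ∀ d ∈ DeltaS (s2 * s3) (s1 * s3) (s1 * s2), Nat.gcd (s1 - s2) (s2 - s3) ≤ d := by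
  rw [← Int.gcd_natCast_natCast, Nat.cast_sub h21.le, Nat.cast_sub h32.le]
  exact min_delta_one_betti_general (.inl h21.ne') (c12.coprime_dvd_right (Nat.gcd_dvd_left s2 s3))
end

section
/- Let a ≥ 2 be an integer, let m1 < m2 be coprime positive integers, and let b, c ∈ ℕ with b + c ≥ 2 and gcd(a, b*m1 + c*m2) = 1, such that n1 = a*m1, n2 = a*m2, n3 = b*m1 + c*m2 is a minimal generating system of the numerical semigroup S generated by {n1,n2,n3}. Choose an integer λ with −⌊b/m2⌋ ≤ λ ≤ ⌊c/m1⌋ minimizing |b + c + λ*(m2 − m1) − a| over this range, and set δ1 = m2 − m1, δ2 = |b + c + λ*(m2 − m1) − a|. Then the minimum of Δ(S) equals gcd(δ1, δ2) (with the convention gcd(δ1, 0) = δ1); that is, gcd(δ1, δ2) ∈ Δ(S) and every element of Δ(S) is at least gcd(δ1, δ2). -/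
/-- `s` belongs to the numerical semigroup generated by `a` and `b`. -/
def genBy2 (a b s : ℕ) : Prop := ∃ x y : ℕ, x * a + y * b = s

/-- `{n1, n2, n3}` is a minimal generating system: none of the generators lies in the
semigroup generated by the other two. -/
def MinimalGen3 (n1 n2 n3 : ℕ) : Prop :=
  ¬ genBy2 n2 n3 n1 ∧ ¬ genBy2 n1 n3 n2 ∧ ¬ genBy2 n1 n2 n3

/-!
The lengths `x + y + z` of the integer relations `x * n1 + y * n2 + z * n3 = 0` are exactly the
differences between two factorization lengths of a common element of the semigroup: split a
relation into its positive and negative parts. They form an ideal of `ℤ`, whose positive generator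
divides every element of the Delta set and is itself realised there. For the generators
`a * m1, a * m2, b * m1 + c * m2`, coprimality of `m1, m2` and of `a, b * m1 + c * m2` shows that
the relations are spanned by `(m2, -m1, 0)` and `(b, c, -a)`, of lengths `m2 - m1` and `b + c - a`.
Adding `λ * (m2 - m1)` to the second length does not change the gcd.
-/

section LengthIdeal

variable {R : Type*} [CommRing R]

/-- The ideal of lengths `x + y + z` of the linear relations `x * n1 + y * n2 + z * n3 = 0`. Over
`ℤ`, with natural `n1, n2, n3`, its elements are the differences between the lengths of two
factorizations of the same element. -/
def lengthIdeal (n1 n2 n3 : R) : Ideal R where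
  carrier := {d | ∃ x y z, x * n1 + y * n2 + z * n3 = 0 ∧ x + y + z = d}
  zero_mem' := ⟨0, 0, 0, by ring, by ring⟩
  add_mem' := by
    rintro _ _ ⟨x, y, z, hrel, rfl⟩ ⟨x', y', z', hrel', rfl⟩
    exact ⟨x + x', y + y', z + z', by linear_combination hrel + hrel', by ring⟩
  smul_mem' := by
    rintro r _ ⟨x, y, z, hrel, rfl⟩
    exact ⟨r * x, r * y, r * z, by linear_combination r * hrel, by rw [smul_eq_mul]; ring⟩

theorem mem_lengthIdeal {n1 n2 n3 d : R} :
    d ∈ lengthIdeal n1 n2 n3 ↔ ∃ x y z, x * n1 + y * n2 + z * n3 = 0 ∧ x + y + z = d :=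
  Iff.rfl

theorem mul_add_mul_eq_zero_iff_of_isCoprime {m n x y : R} (h : IsCoprime m n) :
    x * m + y * n = 0 ↔ ∃ t, x = t * n ∧ y = -(t * m) := by
  constructor
  · obtain ⟨u, v, huv⟩ := h
    intro hxy
    exact ⟨x * v - y * u, by linear_combination u * hxy - x * huv,
      by linear_combination v * hxy - y * huv⟩
  · rintro ⟨t, rfl, rfl⟩
    ring

theorem glued_relation_iff {a m1 m2 b c x y z : R} (hm : IsCoprime m1 m2)
    (ha : IsCoprime a (b * m1 + c * m2)) :
    x * (a * m1) + y * (a * m2) + z * (b * m1 + c * m2) = 0 ↔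
      ∃ t k, x = t * m2 + k * b ∧ y = -(t * m1) + k * c ∧ z = -(k * a) := by
  constructor
  · intro hrel
    obtain ⟨k, hk, hz⟩ := (mul_add_mul_eq_zero_iff_of_isCoprime ha).1
      (show (x * m1 + y * m2) * a + z * (b * m1 + c * m2) = 0 by linear_combination hrel)
    obtain ⟨t, hx, hy⟩ := (mul_add_mul_eq_zero_iff_of_isCoprime hm).1
      (show (x - k * b) * m1 + (y - k * c) * m2 = 0 by linear_combination hk)
    exact ⟨t, k, by linear_combination hx, by linear_combination hy, hz⟩
  · rintro ⟨t, k, rfl, rfl, rfl⟩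
    ring

theorem lengthIdeal_glued_eq_span {a m1 m2 b c : R} (hm : IsCoprime m1 m2)
    (ha : IsCoprime a (b * m1 + c * m2)) :
    lengthIdeal (a * m1) (a * m2) (b * m1 + c * m2) = Ideal.span {m2 - m1, b + c - a} := by
  ext d
  simp only [mem_lengthIdeal, glued_relation_iff hm ha, Ideal.mem_span_pair]
  constructor
  · rintro ⟨_, _, _, ⟨t, k, rfl, rfl, rfl⟩, rfl⟩
    exact ⟨t, k, by ring⟩
  · rintro ⟨t, k, rfl⟩
    exact ⟨_, _, _, ⟨t, k, rfl, rfl, rfl⟩, by ring⟩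

end LengthIdeal

section DeltaSet

variable {n1 n2 n3 : ℕ}

theorem mem_Lset {s l : ℕ} :
    l ∈ Lset n1 n2 n3 s ↔ ∃ x y z, x * n1 + y * n2 + z * n3 = s ∧ x + y + z = l := by
  simp [Lset, Zset, len]

theorem memS_of_mem_Lset {s l : ℕ} (hl : l ∈ Lset n1 n2 n3 s) : memS n1 n2 n3 s := by
  obtain ⟨x, y, z, hs, -⟩ := mem_Lset.1 hl
  exact ⟨x, y, z, hs⟩

theorem sub_mem_lengthIdeal_of_mem_Lset {s l l' : ℕ} (hl : l ∈ Lset n1 n2 n3 s)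
    (hl' : l' ∈ Lset n1 n2 n3 s) : (l - l' : ℤ) ∈ lengthIdeal (n1 : ℤ) n2 n3 := by
  obtain ⟨x, y, z, hs, rfl⟩ := mem_Lset.1 hl
  obtain ⟨x', y', z', hs', rfl⟩ := mem_Lset.1 hl'
  refine ⟨x - x', y - y', z - z', ?_, by push_cast; ring⟩
  zify at hs hs'
  linear_combination hs - hs'

theorem exists_mem_Lset_of_mem_lengthIdeal {d : ℤ} (hd : d ∈ lengthIdeal (n1 : ℤ) n2 n3) :
    ∃ s l l', l ∈ Lset n1 n2 n3 s ∧ l' ∈ Lset n1 n2 n3 s ∧ (l - l' : ℤ) = d := by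
  obtain ⟨x, y, z, hrel, rfl⟩ := hd
  have hx := Int.toNat_sub_toNat_neg x
  have hy := Int.toNat_sub_toNat_neg y
  have hz := Int.toNat_sub_toNat_neg z
  refine ⟨_, _, _, mem_Lset.2 ⟨x.toNat, y.toNat, z.toNat, rfl, rfl⟩,
    mem_Lset.2 ⟨(-x).toNat, (-y).toNat, (-z).toNat, ?_, rfl⟩, ?_⟩
  · zify
    linear_combination -hrel - n1 * hx - n2 * hy - n3 * hz
  · push_cast
    linear_combination hx + hy + hz

theorem isLeast_DeltaS_of_lengthIdeal_eq_span {g : ℕ} (hg : 0 < g)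
    (hspan : lengthIdeal (n1 : ℤ) n2 n3 = Ideal.span {(g : ℤ)}) :
    IsLeast (DeltaS n1 n2 n3) g := by
  have le_sub {s l l' : ℕ} (hl : l ∈ Lset n1 n2 n3 s) (hl' : l' ∈ Lset n1 n2 n3 s)
      (hlt : l' < l) : g ≤ l - l' := by
    have hdvd : (g : ℤ) ∣ l - l' :=
      Ideal.mem_span_singleton.1 (hspan ▸ sub_mem_lengthIdeal_of_mem_Lset hl hl')
    have := Int.le_of_dvd (by omega) hdvd
    omega
  constructor
  · obtain ⟨s, l, l', hl, hl', hsub⟩ := exists_mem_Lset_of_mem_lengthIdeal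
      (hspan ▸ Ideal.mem_span_singleton_self (g : ℤ))
    refine ⟨s, memS_of_mem_Lset hl, l, l', hl, hl', by omega, by omega, ?_⟩
    rintro r hr ⟨hl'r, hrl⟩
    have := le_sub hr hl' hl'r
    omega
  · rintro _ ⟨s, -, l, l', hl, hl', hlt, rfl, -⟩
    exact le_sub hl hl' hlt

end DeltaSet

theorem min_delta_two_betti_general (a m1 m2 b c : ℕ) (hm : m1 < m2)
    (hcop : Nat.Coprime m1 m2) (hg : Nat.gcd a (b * m1 + c * m2) = 1) (lam : ℤ) :
    IsLeast (DeltaS (a * m1) (a * m2) (b * m1 + c * m2))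
      (Nat.gcd (m2 - m1) ((b : ℤ) + c + lam * ((m2 : ℤ) - m1) - a).natAbs) := by
  set e : ℤ := b + c + lam * (m2 - m1) - a with he
  have hgcd : ((m2 - m1).gcd e.natAbs : ℤ) = gcd ((m2 : ℤ) - m1) e := by
    rw [← Int.coe_gcd, ← Nat.cast_sub hm.le, Int.gcd_def, Int.natAbs_natCast]
  have hg' : IsCoprime (a : ℤ) (b * m1 + c * m2) := by
    exact_mod_cast Nat.isCoprime_iff_coprime.2 hg
  apply isLeast_DeltaS_of_lengthIdeal_eq_span (Nat.gcd_pos_of_pos_left _ (Nat.sub_pos_of_lt hm))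
  simp only [Nat.cast_mul, Nat.cast_add]
  calc lengthIdeal ((a : ℤ) * m1) (a * m2) (b * m1 + c * m2)
      = Ideal.span {(m2 : ℤ) - m1, (b : ℤ) + c - a} := lengthIdeal_glued_eq_span hcop.isCoprime hg'
    _ = Ideal.span {(m2 : ℤ) - m1, e} := by
      rw [← Ideal.span_pair_add_mul_left _ _ lam, he, ← add_sub_right_comm]
    _ = Ideal.span {((m2 - m1).gcd e.natAbs : ℤ)} := by rw [hgcd, span_gcd]

/-- The minimum of the Delta set of `⟨a*m1, a*m2, b*m1+c*m2⟩` is `gcd(δ1, δ2)`. -/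
theorem min_delta_two_betti (a m1 m2 b c : ℕ) (ha : 2 ≤ a) (hm1 : 0 < m1) (hm : m1 < m2)
    (hcop : Nat.Coprime m1 m2) (hbc : 2 ≤ b + c)
    (hg : Nat.gcd a (b * m1 + c * m2) = 1)
    (hmin : MinimalGen3 (a * m1) (a * m2) (b * m1 + c * m2))
    (lam : ℤ) (hlo : -((b / m2 : ℕ) : ℤ) ≤ lam) (hhi : lam ≤ ((c / m1 : ℕ) : ℤ))
    (hbest : ∀ mu : ℤ, -((b / m2 : ℕ) : ℤ) ≤ mu → mu ≤ ((c / m1 : ℕ) : ℤ) →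
      |(b : ℤ) + c + lam * ((m2 : ℤ) - m1) - a| ≤ |(b : ℤ) + c + mu * ((m2 : ℤ) - m1) - a|) :
    Nat.gcd (m2 - m1) (((b : ℤ) + c + lam * ((m2 : ℤ) - m1) - a).natAbs) ∈ DeltaS (a * m1) (a * m2) (b * m1 + c * m2) ∧
    ∀ d ∈ DeltaS (a * m1) (a * m2) (b * m1 + c * m2),
      Nat.gcd (m2 - m1) (((b : ℤ) + c + lam * ((m2 : ℤ) - m1) - a).natAbs) ≤ d := by
  have h := min_delta_two_betti_general a m1 m2 b c hm hcop hg lam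
  exact ⟨h.1, fun _ hd => h.2 hd⟩
end

section
/- Let s1 > s2 > s3 ≥ 2 be pairwise coprime positive integers. Then the set of factorizations of s1*s2*s3 with respect to the generators n1 = s2*s3, n2 = s1*s3, n3 = s1*s2, namely {(z1,z2,z3) ∈ ℕ^3 : z1*s2*s3 + z2*s1*s3 + z3*s1*s2 = s1*s2*s3}, equals {(s1,0,0), (0,s2,0), (0,0,s3)}. -/
/-!
Let `N = ∏ j, s j` and let `N / s i` be the generators. Modulo `s i` the equation
`∑ i, z i * (N / s i) = n * N` reads `z i * (N / s i) ≡ 0`, and `N / s i` is a unit modulo `s i`.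
Hence `z i = s i * x i`, and dividing by `N` leaves `∑ i, x i = n`. For `n = 1` exactly one `x i`
equals `1` and the others vanish.
-/

open Finset Function

section

variable {ι : Type*} [Fintype ι] [DecidableEq ι] {s : ι → ℕ}

lemma dvd_of_sum_mul_prod_erase_eq_mul_prod (hs : Pairwise (Nat.Coprime on s)) {z : ι → ℕ} {n : ℕ}
    (h : ∑ i, z i * ∏ j ∈ univ.erase i, s j = n * ∏ j, s j) (i : ι) : s i ∣ z i := by
  have hcop : (s i).Coprime (∏ j ∈ univ.erase i, s j) :=
    Nat.Coprime.prod_right fun j hj => hs (ne_of_mem_erase hj).symm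
  have hrest : s i ∣ ∑ k ∈ univ.erase i, z k * ∏ j ∈ univ.erase k, s j :=
    dvd_sum fun k hk => (dvd_prod_of_mem s
      (mem_erase.2 ⟨(ne_of_mem_erase hk).symm, mem_univ i⟩)).mul_left (z k)
  have htotal : s i ∣ ∑ k, z k * ∏ j ∈ univ.erase k, s j :=
    h ▸ (dvd_prod_of_mem s (mem_univ i)).mul_left n
  rw [← add_sum_erase univ _ (mem_univ i)] at htotal
  exact hcop.dvd_of_dvd_mul_right ((Nat.dvd_add_left hrest).1 htotal)

lemma sum_mul_mul_prod_erase {R : Type*} [CommSemiring R] (s x : ι → R) :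
    ∑ i, s i * x i * ∏ j ∈ univ.erase i, s j = (∑ i, x i) * ∏ j, s j := by
  rw [sum_mul]
  refine sum_congr rfl fun i _ => ?_
  rw [← mul_prod_erase univ s (mem_univ i), mul_comm (s i), mul_assoc]

lemma sum_mul_prod_erase_eq_mul_prod_iff (hs : Pairwise (Nat.Coprime on s)) (hs0 : ∀ i, s i ≠ 0)
    {z : ι → ℕ} {n : ℕ} :
    ∑ i, z i * ∏ j ∈ univ.erase i, s j = n * ∏ j, s j ↔ ∃ x : ι → ℕ, ∑ i, x i = n ∧ z = s * x := by
  constructor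
  · intro h
    choose x hx using dvd_of_sum_mul_prod_erase_eq_mul_prod hs h
    obtain rfl : z = s * x := funext hx
    have hprod : 0 < ∏ j, s j := prod_pos fun i _ => Nat.pos_of_ne_zero (hs0 i)
    exact ⟨x, Nat.eq_of_mul_eq_mul_right hprod ((sum_mul_mul_prod_erase s x).symm.trans h), rfl⟩
  · rintro ⟨x, rfl, rfl⟩
    exact sum_mul_mul_prod_erase s x

lemma sum_eq_one_iff_exists_eq_single {x : ι → ℕ} : ∑ i, x i = 1 ↔ ∃ i, x = Pi.single i 1 := by
  simpa [Finsupp.sum_fintype, DFunLike.ext_iff, funext_iff, Finsupp.single_apply, Pi.single_apply,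
    eq_comm] using Finsupp.sum_eq_one_iff (Finsupp.equivFunOnFinite.symm x)

theorem factorizations_of_betti_one_general (hs : Pairwise (Nat.Coprime on s))
    (hs0 : ∀ i, s i ≠ 0) :
    {z : ι → ℕ | ∑ i, z i * ∏ j ∈ univ.erase i, s j = ∏ j, s j} =
      Set.range fun i => Pi.single i (s i) := by
  ext z
  calc ∑ i, z i * ∏ j ∈ univ.erase i, s j = ∏ j, s j
      ↔ ∃ x : ι → ℕ, ∑ i, x i = 1 ∧ z = s * x := by
        rw [← sum_mul_prod_erase_eq_mul_prod_iff hs hs0, one_mul]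
    _ ↔ ∃ i, z = s * Pi.single i 1 := by
        simp only [sum_eq_one_iff_exists_eq_single]
        exact ⟨fun ⟨_, ⟨i, hx⟩, hz⟩ => ⟨i, hx ▸ hz⟩, fun ⟨i, hz⟩ => ⟨_, ⟨i, rfl⟩, hz⟩⟩
    _ ↔ z ∈ Set.range fun i => Pi.single i (s i) := by
        simp only [← Pi.single_mul_right, mul_one, Set.mem_range, eq_comm]

end

lemma pairwise_on_vec_three {α : Type*} {r : α → α → Prop} [Std.Symm r] {a b c : α}
    (hab : r a b) (hac : r a c) (hbc : r b c) : Pairwise (r on ![a, b, c]) := by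
  simp [Pairwise, Fin.forall_fin_succ, onFun, hab, hac, hbc, symm_of r hab, symm_of r hac,
    symm_of r hbc]

lemma sum_mul_prod_erase_fin_three {R : Type*} [CommSemiring R] (s z : Fin 3 → R) :
    ∑ i, z i * ∏ j ∈ univ.erase i, s j =
      z 0 * (s 1 * s 2) + z 1 * (s 0 * s 2) + z 2 * (s 0 * s 1) := by
  have erase_zero : univ.erase (0 : Fin 3) = {1, 2} := rfl
  have erase_one : univ.erase (1 : Fin 3) = {0, 2} := rfl
  have erase_two : univ.erase (2 : Fin 3) = {0, 1} := rfl
  simp [Fin.sum_univ_three, erase_zero, erase_one, erase_two]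

lemma vec_three_mem_range_single_iff {M : Type*} [Zero M] {s : Fin 3 → M} {a b c : M} :
    (![a, b, c] ∈ Set.range fun i => (Pi.single i (s i) : Fin 3 → M)) ↔
      (a, b, c) ∈ ({(s 0, 0, 0), (0, s 1, 0), (0, 0, s 2)} : Set (M × M × M)) := by
  simp [Fin.exists_fin_succ, funext_iff, Fin.forall_fin_succ, Pi.single_apply, eq_comm, and_or_left]

/-- The factorizations of the Betti element `s1*s2*s3` of `⟨s2*s3, s1*s3, s1*s2⟩` are
exactly `(s1,0,0)`, `(0,s2,0)` and `(0,0,s3)`. -/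
theorem factorizations_of_betti_one (s1 s2 s3 : ℕ) (h3 : 2 ≤ s3) (h32 : s3 < s2) (h21 : s2 < s1)
    (c12 : Nat.Coprime s1 s2) (c13 : Nat.Coprime s1 s3) (c23 : Nat.Coprime s2 s3) :
    {z : ℕ × ℕ × ℕ | z.1 * (s2 * s3) + z.2.1 * (s1 * s3) + z.2.2 * (s1 * s2) =
        s1 * s2 * s3} =
      {((s1, 0, 0) : ℕ × ℕ × ℕ), (0, s2, 0), (0, 0, s3)} := by
  have hs : Pairwise (Nat.Coprime on ![s1, s2, s3]) :=
    pairwise_on_vec_three c12 c13 c23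
  have hs0 : ∀ i, ![s1, s2, s3] i ≠ 0 := by
    intro i
    fin_cases i <;> dsimp <;> omega
  ext ⟨a, b, c⟩
  have hmem := Set.ext_iff.1 (factorizations_of_betti_one_general hs hs0) ![a, b, c]
  rwa [vec_three_mem_range_single_iff, Set.mem_ofPred_eq, sum_mul_prod_erase_fin_three,
    Fin.prod_univ_three] at hmem
end

section
/- Let s1, s2, s3 be pairwise coprime positive integers. Then {(v1,v2,v3) ∈ ℤ^3 : v1*s2*s3 + v2*s1*s3 + v3*s1*s2 = 0} = {λ*(s1,−s2,0) + μ*(0,s2,−s3) : λ, μ ∈ ℤ}; that is, the group of integer solutions of the homogeneous equation s2*s3*x + s1*s3*y + s1*s2*z = 0 is generated by the vectors (s1,−s2,0) and (0,s2,−s3). -/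
/-!
If `a`, `b`, `c` are pairwise coprime, then `bc`, `ac`, `ab` generate the unit ideal. For a solution
`v` of `bc x + ac y + ab z = 0`, each of `bc v`, `ac v`, `ab v` is an explicit combination of
`(a, -b, 0)` and `(0, b, -c)`, and hence so is `v`.
-/

section

variable {R : Type*} [CommRing R] {a b c : R}

theorem exists_mul_pairwise_products_add_eq_one (hab : IsCoprime a b) (hac : IsCoprime a c)
    (hbc : IsCoprime b c) : ∃ p q r : R, p * (b * c) + q * (a * c) + r * (a * b) = 1 := by
  obtain ⟨m, n, hmn⟩ := hab.mul_right hac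
  obtain ⟨k, l, hkl⟩ := hbc
  exact ⟨n, m * l, m * k, by linear_combination hmn + m * a * hkl⟩

theorem mem_of_pairwise_products_smul_mem {M : Type*} [AddCommMonoid M] [Module R M]
    (N : Submodule R M) (hab : IsCoprime a b) (hac : IsCoprime a c) (hbc : IsCoprime b c) {v : M}
    (hv_bc : (b * c) • v ∈ N) (hv_ac : (a * c) • v ∈ N) (hv_ab : (a * b) • v ∈ N) : v ∈ N := by
  obtain ⟨p, q, r, hpqr⟩ := exists_mul_pairwise_products_add_eq_one hab hac hbc
  have hv : p • (b * c) • v + q • (a * c) • v + r • (a * b) • v = v := by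
    rw [smul_smul, smul_smul, smul_smul, ← add_smul, ← add_smul, hpqr, one_smul]
  rw [← hv]
  exact N.add_mem (N.add_mem (N.smul_mem p hv_bc) (N.smul_mem q hv_ac)) (N.smul_mem r hv_ab)

theorem mem_span_pair_of_homogeneous_eq_zero (hab : IsCoprime a b) (hac : IsCoprime a c)
    (hbc : IsCoprime b c) {x y z : R} (h : x * (b * c) + y * (a * c) + z * (a * b) = 0) :
    (x, y, z) ∈ Submodule.span R {(a, -b, 0), (0, b, -c)} := by
  apply mem_of_pairwise_products_smul_mem _ hab hac hbc <;>
    simp only [Submodule.mem_span_pair, Prod.smul_mk, Prod.mk_add_mk, Prod.mk.injEq, smul_eq_mul]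
  · exact ⟨-(c * y + b * z), -(b * z), by linear_combination -h, by ring, by ring⟩
  · exact ⟨c * x, -(a * z), by ring, by linear_combination -h, by ring⟩
  · exact ⟨b * x, b * x + a * y, by ring, by ring, by linear_combination -h⟩

theorem kernel_lattice_generated_general (hab : IsCoprime a b) (hac : IsCoprime a c)
    (hbc : IsCoprime b c) :
    {v : R × R × R | v.1 * (b * c) + v.2.1 * (a * c) + v.2.2 * (a * b) = 0} =
      {v : R × R × R | ∃ lam mu : R, v = lam • (a, -b, 0) + mu • (0, b, -c)} := by
  ext ⟨x, y, z⟩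
  constructor
  · intro h
    obtain ⟨lam, mu, hv⟩ :=
      Submodule.mem_span_pair.mp (mem_span_pair_of_homogeneous_eq_zero hab hac hbc h)
    exact ⟨lam, mu, hv.symm⟩
  · rintro ⟨lam, mu, hv⟩
    simp only [Prod.smul_mk, Prod.mk_add_mk, Prod.mk.injEq, smul_eq_mul] at hv
    obtain ⟨rfl, rfl, rfl⟩ := hv
    simp only [Set.mem_ofPred_eq]
    ring

end

/-- The group of integer solutions of `s2*s3*x + s1*s3*y + s1*s2*z = 0` is generated by
`(s1, -s2, 0)` and `(0, s2, -s3)`. -/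
theorem kernel_lattice_generated (s1 s2 s3 : ℕ) (h1 : 0 < s1) (h2 : 0 < s2) (h3 : 0 < s3)
    (c12 : Nat.Coprime s1 s2) (c13 : Nat.Coprime s1 s3) (c23 : Nat.Coprime s2 s3) :
    {v : ℤ × ℤ × ℤ | v.1 * (s2 * s3) + v.2.1 * (s1 * s3) + v.2.2 * (s1 * s2) = 0} =
      {v : ℤ × ℤ × ℤ | ∃ lam mu : ℤ,
        v = lam • (((s1 : ℤ), -(s2 : ℤ), (0 : ℤ)) : ℤ × ℤ × ℤ) +
            mu • ((((0 : ℤ)), (s2 : ℤ), -(s3 : ℤ)) : ℤ × ℤ × ℤ)} :=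
  kernel_lattice_generated_general c12.isCoprime c13.isCoprime c23.isCoprime
end

section
/- Let a ≥ 2 be an integer, let m1 < m2 be coprime positive integers, and let b, c ∈ ℕ with b + c ≥ 2 and gcd(a, b*m1 + c*m2) = 1, such that n1 = a*m1, n2 = a*m2, n3 = b*m1 + c*m2 is a minimal generating system of the numerical semigroup S generated by {n1,n2,n3}. Then the set of factorizations of a*(b*m1+c*m2), namely {(z1,z2,z3) ∈ ℕ^3 : z1*n1 + z2*n2 + z3*n3 = a*(b*m1+c*m2)}, equals {(0,0,a)} ∪ {(b + k*m2, c − k*m1, 0) : k ∈ ℤ, −⌊b/m2⌋ ≤ k ≤ ⌊c/m1⌋}. -/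
/-!
Modulo `a` the defining equation reads `z₃ * n₃ ≡ 0` with `n₃ = b * m₁ + c * m₂`, so coprimality
leaves only `z₃ = 0` and `z₃ = a`. The latter forces `z₁ = z₂ = 0`, while the former, after
cancelling `a`, becomes the linear equation `z₁ * m₁ + z₂ * m₂ = b * m₁ + c * m₂`, whose integer
solutions form the line through `(b, c)` with direction `(m₂, -m₁)`; the bounds on `k` cut out its
points in `ℕ²`.
-/

theorem mul_add_mul_eq_mul_iff_of_coprime {a n u z : ℕ} (ha : 0 < a) (hn : 0 < n)
    (hcop : Nat.Coprime a n) : u * a + z * n = a * n ↔ (u = 0 ∧ z = a) ∨ (u = n ∧ z = 0) := by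
  constructor
  · intro h
    have hzero : u = 0 ∨ z = 0 := by
      by_contra! hne
      exact hcop.mul_add_mul_ne_mul hne.1 hne.2 h
    rcases hzero with rfl | rfl
    · exact .inl ⟨rfl, Nat.eq_of_mul_eq_mul_right hn (by simpa using h)⟩
    · exact .inr ⟨Nat.eq_of_mul_eq_mul_right ha (by linarith), rfl⟩
  · rintro (⟨rfl, rfl⟩ | ⟨rfl, rfl⟩) <;> ring

theorem mul_add_mul_eq_iff_exists_of_isCoprime {R : Type*} [CommRing R] {p q : R}
    (hpq : IsCoprime p q) {x y b c : R} :
    x * p + y * q = b * p + c * q ↔ ∃ k, x = b + k * q ∧ y = c - k * p := by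
  constructor
  · intro h
    obtain ⟨s, t, hst⟩ := hpq
    -- The witness is `s * (k * p) + t * (k * q)` for the `k` with `k * q = x - b`, `k * p = c - y`.
    refine ⟨s * (c - y) + t * (x - b), ?_, ?_⟩
    · linear_combination (b - x) * hst + s * h
    · linear_combination (c - y) * hst + t * h
  · rintro ⟨k, rfl, rfl⟩
    ring

theorem neg_natCast_div_le_iff {b q : ℕ} (hq : 0 < q) {k : ℤ} :
    -((b / q : ℕ) : ℤ) ≤ k ↔ 0 ≤ (b : ℤ) + k * q := by
  rw [neg_le, Int.natCast_div, Int.le_ediv_iff_mul_le (by exact_mod_cast hq)]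
  constructor <;> intro h <;> linarith

theorem le_natCast_div_iff {c p : ℕ} (hp : 0 < p) {k : ℤ} :
    k ≤ ((c / p : ℕ) : ℤ) ↔ 0 ≤ (c : ℤ) - k * p := by
  rw [Int.natCast_div, Int.le_ediv_iff_mul_le (by exact_mod_cast hp), sub_nonneg]

theorem nat_mul_add_mul_eq_iff_exists_of_coprime {p q : ℕ} (hp : 0 < p) (hq : 0 < q)
    (hpq : Nat.Coprime p q) {x y b c : ℕ} :
    x * p + y * q = b * p + c * q ↔
      ∃ k : ℤ, -((b / q : ℕ) : ℤ) ≤ k ∧ k ≤ ((c / p : ℕ) : ℤ) ∧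
        (x : ℤ) = b + k * q ∧ (y : ℤ) = c - k * p := by
  have integer_solutions : x * p + y * q = b * p + c * q ↔
      ∃ k : ℤ, (x : ℤ) = b + k * q ∧ (y : ℤ) = c - k * p := by
    rw [← mul_add_mul_eq_iff_exists_of_isCoprime hpq.isCoprime]
    norm_cast
  rw [integer_solutions]
  refine exists_congr fun k ↦ ⟨fun ⟨hx, hy⟩ ↦ ⟨?_, ?_, hx, hy⟩, fun ⟨_, _, hxy⟩ ↦ hxy⟩
  · exact (neg_natCast_div_le_iff hq).2 (hx ▸ x.cast_nonneg)
  · exact (le_natCast_div_iff hp).2 (hy ▸ y.cast_nonneg)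

theorem factorizations_of_betti_abc_general (a m1 m2 b c : ℕ) (ha : 0 < a) (hm1 : 0 < m1)
    (hm2 : 0 < m2) (hcop : Nat.Coprime m1 m2) (hbc : 0 < b + c)
    (hg : Nat.gcd a (b * m1 + c * m2) = 1) :
    {z : ℕ × ℕ × ℕ | z.1 * (a * m1) + z.2.1 * (a * m2) + z.2.2 * (b * m1 + c * m2) =
        a * (b * m1 + c * m2)} =
      {((0, 0, a) : ℕ × ℕ × ℕ)} ∪
      {z : ℕ × ℕ × ℕ | ∃ k : ℤ, -((b / m2 : ℕ) : ℤ) ≤ k ∧ k ≤ ((c / m1 : ℕ) : ℤ) ∧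
          (z.1 : ℤ) = (b : ℤ) + k * m2 ∧ (z.2.1 : ℤ) = (c : ℤ) - k * m1 ∧ z.2.2 = 0} := by
  have hn3 : 0 < b * m1 + c * m2 := by
    rcases Nat.add_pos_iff_pos_or_pos.1 hbc with hb | hc <;> positivity
  ext ⟨x, y, z⟩
  have group_multiples_of_a : x * (a * m1) + y * (a * m2) = (x * m1 + y * m2) * a := by ring
  have hzero : x * m1 + y * m2 = 0 ↔ x = 0 ∧ y = 0 := by simp [hm1.ne', hm2.ne']
  simp only [Set.mem_ofPred_eq, Set.mem_union, Set.mem_singleton_iff, Prod.mk.injEq]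
  rw [group_multiples_of_a, mul_add_mul_eq_mul_iff_of_coprime ha hn3 hg, hzero,
    nat_mul_add_mul_eq_iff_exists_of_coprime hm1 hm2 hcop]
  simp only [← exists_and_right, and_assoc]

/-- The factorizations of the Betti element `a*(b*m1+c*m2)` of `⟨a*m1, a*m2, b*m1+c*m2⟩`
are `(0,0,a)` together with `(b + k*m2, c - k*m1, 0)` for `-⌊b/m2⌋ ≤ k ≤ ⌊c/m1⌋`. -/
theorem factorizations_of_betti_abc (a m1 m2 b c : ℕ) (ha : 2 ≤ a) (hm1 : 0 < m1) (hm : m1 < m2)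
    (hcop : Nat.Coprime m1 m2) (hbc : 2 ≤ b + c)
    (hg : Nat.gcd a (b * m1 + c * m2) = 1)
    (hmin : MinimalGen3 (a * m1) (a * m2) (b * m1 + c * m2)) :
    {z : ℕ × ℕ × ℕ | z.1 * (a * m1) + z.2.1 * (a * m2) + z.2.2 * (b * m1 + c * m2) =
        a * (b * m1 + c * m2)} =
      {((0, 0, a) : ℕ × ℕ × ℕ)} ∪
      {z : ℕ × ℕ × ℕ | ∃ k : ℤ, -((b / m2 : ℕ) : ℤ) ≤ k ∧ k ≤ ((c / m1 : ℕ) : ℤ) ∧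
          (z.1 : ℤ) = (b : ℤ) + k * m2 ∧ (z.2.1 : ℤ) = (c : ℤ) - k * m1 ∧ z.2.2 = 0} :=
  factorizations_of_betti_abc_general a m1 m2 b c (by lia) hm1 (hm1.trans hm) hcop (by lia) hg
end

section
/- Let δ1, δ2 be positive integers, g = gcd(δ1,δ2), and let λ1, λ2 be integers with 0 < λ1*δ1 + λ2*δ2 ≤ max{δ1,δ2}. Then there exist integers a1, a2, α with (a1,a2) ≠ (0,0), a1*a2 ≤ 0, −δ2/g < a1 ≤ δ2/g, −δ1/g < a2 ≤ δ1/g, λ1 = a1 + α*(δ2/g) and λ2 = a2 − α*(δ1/g); moreover, there are exactly two triples (a1,a2,α) of integers satisfying all these conditions. -/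
/-!
Put `p = δ1 / g` and `q = δ2 / g`. A triple satisfying the two linear equations is determined by
`α`, and `a1 * p + a2 * q = l1 * p + l2 * q` does not depend on `α`; after division by `g` the
hypotheses place this number strictly between `0` and `p + q`. For such a pair the single condition
`-q < a1 ≤ q` implies all the others: if `0 < a1 ≤ q` then `-p < a2 ≤ 0`, and if `-q < a1 ≤ 0` then
`0 < a2 ≤ p`. So `α` ranges over the integers with `l1 - α * q ∈ (-q, q]`, an interval of length
`2 * q`, and there are exactly two of these.
-/

open Set

theorem sub_zsmul_mem_Ioc_neg_self_iff {G : Type*} [AddCommGroup G] [LinearOrder G]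
    [IsOrderedAddMonoid G] [Archimedean G] {q : G} (hq : 0 < q) (l : G) (α : ℤ) :
    l - α • q ∈ Ioc (-q) q ↔ α = toIocDiv hq 0 l ∨ α = toIocDiv hq 0 l + 1 := by
  have split_Ioc : Ioc (-q) q = Ioc 0 (0 + q) ∪ Ioc (-q) (-q + q) := by
    rw [zero_add, neg_add_cancel, union_comm,
      Ioc_union_Ioc_eq_Ioc (neg_nonpos.2 hq.le) hq.le]
  have div_neg_self : toIocDiv hq (-q) l = toIocDiv hq 0 l + 1 := by
    rw [← zero_sub, toIocDiv_sub']
  have mem_iff (c : G) : l - α • q ∈ Ioc c (c + q) ↔ α = toIocDiv hq c l :=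
    ⟨fun h => (toIocDiv_eq_of_sub_zsmul_mem_Ioc hq h).symm,
      fun h => h ▸ sub_toIocDiv_zsmul_mem_Ioc hq c l⟩
  rw [split_Ioc, mem_union, mem_iff, mem_iff, div_neg_self]

section Pairs

variable {p q a b : ℤ}

theorem snd_mem_Ioc_neg_zero_of_fst_mem_Ioc_zero (hp : 0 < p) (hq : 0 < q)
    (hpos : 0 < a * p + b * q) (hlt : a * p + b * q < p + q) (ha : a ∈ Ioc 0 q) :
    b ∈ Ioc (-p) 0 := by
  have p_le : p ≤ a * p := le_mul_of_one_le_left hp.le ha.1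
  have le_qp : a * p ≤ q * p := mul_le_mul_of_nonneg_right ha.2 hp.le
  have lower : -p * q < b * q := by linarith
  have upper : b * q < 1 * q := by linarith
  exact ⟨lt_of_mul_lt_mul_right lower hq.le,
    Int.lt_add_one_iff.1 (lt_of_mul_lt_mul_right upper hq.le)⟩

theorem snd_mem_Ioc_zero_of_fst_mem_Ioc_neg_zero (hp : 0 < p) (hq : 0 < q)
    (hpos : 0 < a * p + b * q) (hlt : a * p + b * q < p + q) (ha : a ∈ Ioc (-q) 0) :
    b ∈ Ioc 0 p := by
  have nonpos : a * p ≤ 0 := mul_nonpos_of_nonpos_of_nonneg ha.2 hp.le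
  have le_mul : (-q + 1) * p ≤ a * p := mul_le_mul_of_nonneg_right ha.1 hp.le
  have lower : 0 * q < b * q := by linarith
  have upper : b * q < (p + 1) * q := by linarith
  exact ⟨lt_of_mul_lt_mul_right lower hq.le,
    Int.lt_add_one_iff.1 (lt_of_mul_lt_mul_right upper hq.le)⟩

theorem normalized_iff_fst_mem_Ioc (hp : 0 < p) (hq : 0 < q)
    (hpos : 0 < a * p + b * q) (hlt : a * p + b * q < p + q) :
    (¬(a = 0 ∧ b = 0) ∧ a * b ≤ 0 ∧ -q < a ∧ a ≤ q ∧ -p < b ∧ b ≤ p) ↔ a ∈ Ioc (-q) q := by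
  refine ⟨fun ⟨_, _, ha, ha', _, _⟩ => ⟨ha, ha'⟩, fun ha => ?_⟩
  have ne_zero : ¬(a = 0 ∧ b = 0) := by
    rintro ⟨rfl, rfl⟩
    simp at hpos
  rcases lt_or_ge 0 a with a_pos | a_nonpos
  · have hb := snd_mem_Ioc_neg_zero_of_fst_mem_Ioc_zero hp hq hpos hlt ⟨a_pos, ha.2⟩
    exact ⟨ne_zero, mul_nonpos_of_nonneg_of_nonpos a_pos.le hb.2, ha.1, ha.2, hb.1,
      hb.2.trans hp.le⟩
  · have hb := snd_mem_Ioc_zero_of_fst_mem_Ioc_neg_zero hp hq hpos hlt ⟨ha.1, a_nonpos⟩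
    exact ⟨ne_zero, mul_nonpos_of_nonpos_of_nonneg a_nonpos hb.1.le, ha.1, ha.2,
      (neg_lt_zero.2 hp).trans hb.1, hb.2⟩

end Pairs

/-- The triple `(a1, a2, α)` determined by `α` through `l1 = a1 + α * q` and `l2 = a2 - α * p`. -/
def shiftedTriple (p q l1 l2 α : ℤ) : ℤ × ℤ × ℤ :=
  (l1 - α * q, l2 + α * p, α)

theorem eq_shiftedTriple_iff {p q l1 l2 α : ℤ} {t : ℤ × ℤ × ℤ} :
    t = shiftedTriple p q l1 l2 α ↔
      (l1 = t.1 + t.2.2 * q ∧ l2 = t.2.1 - t.2.2 * p) ∧ t.2.2 = α := by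
  obtain ⟨a, b, β⟩ := t
  simp only [shiftedTriple, Prod.mk.injEq]
  constructor
  · rintro ⟨rfl, rfl, rfl⟩
    exact ⟨⟨by ring, by ring⟩, rfl⟩
  · rintro ⟨⟨rfl, rfl⟩, rfl⟩
    exact ⟨by ring, by ring, rfl⟩

theorem normalized_triples_eq_pair {p q l1 l2 : ℤ} (hp : 0 < p) (hq : 0 < q)
    (hpos : 0 < l1 * p + l2 * q) (hlt : l1 * p + l2 * q < p + q) :
    {t : ℤ × ℤ × ℤ | ¬(t.1 = 0 ∧ t.2.1 = 0) ∧ t.1 * t.2.1 ≤ 0 ∧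
        -q < t.1 ∧ t.1 ≤ q ∧ -p < t.2.1 ∧ t.2.1 ≤ p ∧
        l1 = t.1 + t.2.2 * q ∧ l2 = t.2.1 - t.2.2 * p} =
      {shiftedTriple p q l1 l2 (toIocDiv hq 0 l1),
        shiftedTriple p q l1 l2 (toIocDiv hq 0 l1 + 1)} := by
  ext t
  rw [mem_insert_iff, mem_singleton_iff, eq_shiftedTriple_iff, eq_shiftedTriple_iff,
    ← and_or_left, ← sub_zsmul_mem_Ioc_neg_self_iff, smul_eq_mul]
  suffices (l1 = t.1 + t.2.2 * q ∧ l2 = t.2.1 - t.2.2 * p) →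
      ((¬(t.1 = 0 ∧ t.2.1 = 0) ∧ t.1 * t.2.1 ≤ 0 ∧ -q < t.1 ∧ t.1 ≤ q ∧ -p < t.2.1 ∧ t.2.1 ≤ p) ↔
        l1 - t.2.2 * q ∈ Ioc (-q) q) by
    rw [← and_congr_right this, mem_ofPred_eq]
    tauto
  rintro ⟨hl1, hl2⟩
  have invariant : t.1 * p + t.2.1 * q = l1 * p + l2 * q := by
    rw [hl1, hl2]
    ring
  rw [← eq_sub_of_add_eq hl1.symm]
  exact normalized_iff_fst_mem_Ioc hp hq (invariant ▸ hpos) (invariant ▸ hlt)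

theorem normalization_two_triples_general {δ1 δ2 d : ℕ} (h1 : 0 < δ1) (h2 : 0 < δ2)
    (hd1 : d ∣ δ1) (hd2 : d ∣ δ2) {l1 l2 : ℤ} (hpos : 0 < l1 * δ1 + l2 * δ2)
    (hlt : l1 * δ1 + l2 * δ2 < δ1 + δ2) :
    ∃ t1 t2 : ℤ × ℤ × ℤ, t1 ≠ t2 ∧
      {t : ℤ × ℤ × ℤ | ¬(t.1 = 0 ∧ t.2.1 = 0) ∧ t.1 * t.2.1 ≤ 0 ∧
        -((δ2 / d : ℕ) : ℤ) < t.1 ∧ t.1 ≤ ((δ2 / d : ℕ) : ℤ) ∧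
        -((δ1 / d : ℕ) : ℤ) < t.2.1 ∧ t.2.1 ≤ ((δ1 / d : ℕ) : ℤ) ∧
        l1 = t.1 + t.2.2 * ((δ2 / d : ℕ) : ℤ) ∧
        l2 = t.2.1 - t.2.2 * ((δ1 / d : ℕ) : ℤ)} = {t1, t2} := by
  have hd : 0 < d := Nat.pos_of_dvd_of_pos hd1 h1
  obtain ⟨p, rfl⟩ := hd1
  obtain ⟨q, rfl⟩ := hd2
  rw [Nat.mul_div_cancel_left p hd, Nat.mul_div_cancel_left q hd]
  have hp : (0 : ℤ) < p := mod_cast Nat.pos_of_mul_pos_left h1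
  have hq : (0 : ℤ) < q := mod_cast Nat.pos_of_mul_pos_left h2
  have d_nonneg : (0 : ℤ) ≤ d := d.cast_nonneg
  have factor : l1 * (d * p : ℕ) + l2 * (d * q : ℕ) = d * (l1 * p + l2 * q) := by
    push_cast
    ring
  rw [factor] at hpos hlt
  have reduced_pos : 0 < l1 * p + l2 * q := pos_of_mul_pos_right hpos d_nonneg
  have reduced_lt : l1 * p + l2 * q < p + q :=
    lt_of_mul_lt_mul_left (hlt.trans_eq (by push_cast; ring)) d_nonneg
  refine ⟨_, _, fun heq => ?_, normalized_triples_eq_pair hp hq reduced_pos reduced_lt⟩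
  exact (lt_add_one _).ne (eq_shiftedTriple_iff.1 heq).2

/-- Normalization: any coefficients `λ1, λ2` with `0 < λ1*δ1 + λ2*δ2 ≤ max(δ1,δ2)` can
be written as `λ1 = a1 + α*(δ2/g)`, `λ2 = a2 - α*(δ1/g)` with `(a1,a2) ≠ (0,0)`,
`a1*a2 ≤ 0`, `-δ2/g < a1 ≤ δ2/g`, `-δ1/g < a2 ≤ δ1/g`; and there are exactly two such
triples `(a1, a2, α)`. -/
theorem normalization_two_triples (δ1 δ2 : ℕ) (h1 : 0 < δ1) (h2 : 0 < δ2) (l1 l2 : ℤ)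
    (hpos : 0 < l1 * δ1 + l2 * δ2) (hle : l1 * δ1 + l2 * δ2 ≤ (max δ1 δ2 : ℤ)) :
    ∃ t1 t2 : ℤ × ℤ × ℤ, t1 ≠ t2 ∧
      {t : ℤ × ℤ × ℤ | ¬ (t.1 = 0 ∧ t.2.1 = 0) ∧ t.1 * t.2.1 ≤ 0 ∧
        -((δ2 / Nat.gcd δ1 δ2 : ℕ) : ℤ) < t.1 ∧ t.1 ≤ ((δ2 / Nat.gcd δ1 δ2 : ℕ) : ℤ) ∧
        -((δ1 / Nat.gcd δ1 δ2 : ℕ) : ℤ) < t.2.1 ∧ t.2.1 ≤ ((δ1 / Nat.gcd δ1 δ2 : ℕ) : ℤ) ∧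
        l1 = t.1 + t.2.2 * ((δ2 / Nat.gcd δ1 δ2 : ℕ) : ℤ) ∧ l2 = t.2.1 - t.2.2 * ((δ1 / Nat.gcd δ1 δ2 : ℕ) : ℤ)} = {t1, t2} := by
  exact normalization_two_triples_general h1 h2 (Nat.gcd_dvd_left δ1 δ2) (Nat.gcd_dvd_right δ1 δ2)
    hpos (by omega)
end

section
/- Let s1 > s2 > s3 ≥ 2 be pairwise coprime positive integers, let S be the numerical semigroup generated by n1 = s2*s3, n2 = s1*s3, n3 = s1*s2, and set δ1 = s1 − s2, δ2 = s2 − s3. Let s ∈ S and let z, z' ∈ Z(s) be factorizations of s with ℓ(z') < ℓ(z) and ℓ(z) − ℓ(z') ∉ Euc(δ1,δ2). Then there exists a factorization z'' ∈ Z(s) with ℓ(z') < ℓ(z'') < ℓ(z). -/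
/-!
Write `n1, n2, n3` for the generators `s2 * s3, s1 * s3, s1 * s2`. Since `s1 * n1`, `s2 * n2` and
`s3 * n3` all equal `s1 * s2 * s3`, coprimality shows that two factorizations of one element differ
by `s1 * p` in the first coordinate, `-s2 * (p + q)` in the second and `s3 * q` in the third, and
their lengths differ by `δ1 * p - δ2 * q`. An intermediate length is found by carrying out only a
part `(x, y)` of the change `(p, q)`. If `p ≥ 0 > q`, the part `(0, -1)` works: it adds `δ2`, which
lies in `Euc δ1 δ2` and so differs from the given length difference. If `p` and `q` are both
nonnegative, one seeks `0 ≤ x ≤ p` and `0 ≤ y ≤ q` such that `δ1 * x - δ2 * y` is positive and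
smaller than `δ1 * p - δ2 * q`; the case of two negative signs is symmetric. A shear such as
`(x, y) ↦ (x, y - x)` replaces the larger of `δ1, δ2` by their difference, and the inclusion
`Euc c b ⊆ Euc (c + b) b` matches each such step of the subtractive Euclidean algorithm.
-/

theorem etaSeq_succ_s18 (a b : ℕ) : ∀ n, etaSeq a b (n + 1) = etaSeq b (a % b) n
  | 0 => rfl
  | 1 => rfl
  | n + 2 => by
    rw [etaSeq, etaSeq_succ_s18 a b n, etaSeq_succ_s18 a b (n + 1), ← etaSeq]

theorem etaSeq_add_right_succ (c b n : ℕ) : etaSeq (c + b) b (n + 1) = etaSeq c b (n + 1) := by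
  rw [etaSeq_succ_s18, etaSeq_succ_s18, Nat.add_mod_right]

theorem Dset_subset_Dset_of_le {u v lo lo' : ℕ} (h : lo' ≤ lo) : Dset u v lo ⊆ Dset u v lo' := by
  rintro x ⟨q, hlo, hq, hx⟩
  exact ⟨q, h.trans hlo, hq, hx⟩

theorem Dset_subset_Dset_add_right {u v : ℕ} (lo : ℕ) (hv : 0 < v) :
    Dset u v lo ⊆ Dset (u + v) v (lo + 1) := by
  rintro x ⟨q, hlo, hq, hx⟩
  refine ⟨q + 1, by omega, ?_, ?_⟩
  · rw [Nat.add_div_right u hv]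
    omega
  · rw [hx, Nat.add_one_mul, Nat.add_sub_add_right]

theorem mem_Dset_succ_or_eq {u v lo x : ℕ} (hx : x ∈ Dset u v lo) :
    x ∈ Dset u v (lo + 1) ∨ x = u - lo * v := by
  obtain ⟨q, hlo, hq, rfl⟩ := hx
  rcases hlo.eq_or_lt with rfl | hlt
  · exact Or.inr rfl
  · exact Or.inl ⟨q, hlt, hq, rfl⟩

theorem Euc_comm (a b : ℕ) : Euc a b = Euc b a := by
  rw [Euc, Euc, max_comm, min_comm]

theorem mem_Euc_iff_of_le {a b x : ℕ} (hba : b ≤ a) :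
    x ∈ Euc a b ↔ ∃ j, 0 < etaSeq a b (j + 1) ∧
      x ∈ Dset (etaSeq a b j) (etaSeq a b (j + 1)) (if j ≤ 1 then 0 else 1) := by
  rw [Euc, max_eq_left hba, min_eq_right hba, Set.mem_ofPred_eq]

theorem Dset_subset_Euc {a b : ℕ} (hb : 0 < b) (hba : b ≤ a) : Dset a b 0 ⊆ Euc a b :=
  fun _ hx ↦ (mem_Euc_iff_of_le hba).2 ⟨0, hb, hx⟩

theorem Euc_subset_Euc_add_right_of_le {b c : ℕ} (hb : 0 < b) (hbc : b ≤ c) :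
    Euc c b ⊆ Euc (c + b) b := by
  intro x hx
  obtain ⟨_ | j, hpos, hx⟩ := (mem_Euc_iff_of_le hbc).1 hx
  · exact Dset_subset_Euc hb (Nat.le_add_left b c)
      (Dset_subset_Dset_of_le zero_le_one (Dset_subset_Dset_add_right 0 hb hx))
  · refine (mem_Euc_iff_of_le (Nat.le_add_left b c)).2 ⟨j + 1, ?_⟩
    simp only [etaSeq_add_right_succ]
    exact ⟨hpos, hx⟩

theorem Euc_subset_Euc_add_right_of_lt {b c : ℕ} (hcb : c < b) : Euc c b ⊆ Euc (c + b) b := by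
  intro x hx
  rw [Euc_comm] at hx
  obtain ⟨j, hpos, hx⟩ := (mem_Euc_iff_of_le hcb.le).1 hx
  have level_succ (n : ℕ) : etaSeq (c + b) b (n + 1) = etaSeq b c n := by
    rw [etaSeq_add_right_succ, etaSeq_succ_s18, Nat.mod_eq_of_lt hcb]
  have mem_of_level_succ (h : x ∈ Dset (etaSeq b c j) (etaSeq b c (j + 1))
      (if j + 1 ≤ 1 then 0 else 1)) : x ∈ Euc (c + b) b := by
    refine (mem_Euc_iff_of_le (Nat.le_add_left b c)).2 ⟨j + 1, ?_⟩
    simp only [level_succ]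
    exact ⟨hpos, h⟩
  match j with
  | 0 => exact mem_of_level_succ hx
  | 1 =>
    -- Level `1` starts at `q = 0` but level `2` at `q = 1`; the lost element `c` is `(c + b) - b`.
    rcases mem_Dset_succ_or_eq hx with hx | hx
    · exact mem_of_level_succ hx
    · have hb : 0 < b := Nat.zero_lt_of_lt hcb
      refine Dset_subset_Euc hb (Nat.le_add_left b c) ⟨1, zero_le_one, ?_, ?_⟩
      · exact Nat.div_pos (Nat.le_add_left b c) hb
      · simpa [etaSeq] using hx
  | j + 2 => exact mem_of_level_succ (by simpa using hx)

theorem Euc_subset_Euc_add_right {b : ℕ} (hb : 0 < b) (c : ℕ) : Euc c b ⊆ Euc (c + b) b :=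
  (le_or_gt b c).elim (Euc_subset_Euc_add_right_of_le hb) Euc_subset_Euc_add_right_of_lt

theorem Euc_subset_Euc_add_left {a : ℕ} (ha : 0 < a) (c : ℕ) : Euc a c ⊆ Euc a (c + a) := by
  rw [Euc_comm a c, Euc_comm a (c + a)]
  exact Euc_subset_Euc_add_right ha c

theorem left_mem_Euc {a b : ℕ} (ha : 0 < a) (hb : 0 < b) : a ∈ Euc a b := by
  rcases le_or_gt b a with hba | hab
  · exact Dset_subset_Euc hb hba ⟨0, le_rfl, Nat.zero_le _, by simp⟩
  · have hmem : a ∈ Euc a (b - a) := left_mem_Euc ha (Nat.sub_pos_of_lt hab)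
    simpa only [Nat.sub_add_cancel hab.le] using Euc_subset_Euc_add_left ha (b - a) hmem
termination_by b

theorem right_mem_Euc {a b : ℕ} (ha : 0 < a) (hb : 0 < b) : b ∈ Euc a b :=
  Euc_comm b a ▸ left_mem_Euc hb ha

theorem exists_between_of_not_mem_Euc {a b p q d : ℕ} (hb : 0 < b) (hd : 0 < d)
    (h : b * q + d = a * p) (hne : d ∉ Euc a b) :
    ∃ x ≤ p, ∃ y ≤ q, b * y < a * x ∧ a * x < b * y + d := by
  have hap : 0 < a * p := by omega
  have ha : 0 < a := Nat.pos_of_mul_pos_right hap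
  have hp : 0 < p := Nat.pos_of_mul_pos_left hap
  have hda : d ≠ a := fun hda ↦ hne (by rw [hda]; exact left_mem_Euc ha hb)
  rcases hda.lt_or_gt with hda | had
  · rcases le_or_gt a b with hab | hba
    · obtain ⟨c, rfl⟩ := Nat.exists_eq_add_of_le' hab
      have hqp : q ≤ p := by nlinarith
      obtain ⟨r, rfl⟩ := Nat.exists_eq_add_of_le' hqp
      have h' : c * q + d = a * r := by linarith
      have hc : 0 < c := by
        refine Nat.pos_of_ne_zero ?_
        rintro rfl
        exact hda.not_ge (Nat.le_of_dvd hd ⟨r, by simpa using h'⟩)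
      obtain ⟨x, hx, y, hy, hlo, hhi⟩ :=
        exists_between_of_not_mem_Euc hc hd h' fun hmem ↦ hne (Euc_subset_Euc_add_left ha c hmem)
      exact ⟨x + y, by omega, y, hy, by linarith, by linarith⟩
    · have hpq : p < q + 1 := Nat.lt_of_mul_lt_mul_left (a := a) (by nlinarith)
      obtain ⟨c, rfl⟩ := Nat.exists_eq_add_of_le' hba.le
      obtain ⟨r, rfl⟩ := Nat.exists_eq_add_of_le' (Nat.le_of_lt_succ hpq)
      have h' : b * r + d = c * p := by linarith
      obtain ⟨x, hx, y, hy, hlo, hhi⟩ :=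
        exists_between_of_not_mem_Euc hb hd h' fun hmem ↦ hne (Euc_subset_Euc_add_right hb c hmem)
      exact ⟨x, hx, y + x, by omega, by linarith, by linarith⟩
  · exact ⟨1, hp, 0, Nat.zero_le q, by simpa using ha, by simpa using had⟩
termination_by a + b

theorem exists_int_between_of_not_mem_Euc {a b d : ℕ} {p q : ℤ} (ha : 0 < a) (hb : 0 < b)
    (hd : 0 < d) (h : (a * p - b * q : ℤ) = d) (hne : d ∉ Euc a b) :
    ∃ x y : ℤ, min 0 p ≤ x ∧ min 0 (-(p + q)) ≤ -(x + y) ∧ min 0 q ≤ y ∧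
      0 < a * x - b * y ∧ a * x - b * y < d := by
  rcases le_or_gt 0 p with hp | hp
  · rcases le_or_gt 0 q with hq | hq
    · lift p to ℕ using hp
      lift q to ℕ using hq
      obtain ⟨x, hx, y, hy, hlo, hhi⟩ :=
        exists_between_of_not_mem_Euc (p := p) (q := q) hb hd (by zify; linarith) hne
      zify at hlo hhi
      exact ⟨x, y, by omega, by omega, by omega, by linarith, by linarith⟩
    · have hbd : b ≠ d := fun hbd ↦ hne (hbd ▸ right_mem_Euc ha hb)
      have hbd' : (b : ℤ) ≤ d := by nlinarith
      exact ⟨0, -1, by omega, by omega, by omega, by omega, by omega⟩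
  · have hq : q < 0 := by
      by_contra! hq
      nlinarith
    obtain ⟨p, rfl⟩ := Int.exists_eq_neg_ofNat hp.le
    obtain ⟨q, rfl⟩ := Int.exists_eq_neg_ofNat hq.le
    obtain ⟨y, hy, x, hx, hlo, hhi⟩ :=
      exists_between_of_not_mem_Euc (p := q) (q := p) ha hd (by zify; linarith)
        (Euc_comm a b ▸ hne)
    zify at hlo hhi
    exact ⟨-x, -y, by omega, by omega, by omega, by linarith, by linarith⟩

section Syzygy

variable {R : Type*} [CommRing R] {a b c x y z : R}

theorem dvd_of_pairwise_mul_combination_eq_zero (hab : IsCoprime a b) (hac : IsCoprime a c)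
    (h : x * (b * c) + y * (a * c) + z * (a * b) = 0) : a ∣ x := by
  refine (hab.mul_right hac).dvd_of_dvd_mul_right ⟨-(y * c + z * b), ?_⟩
  linear_combination h

theorem exists_of_pairwise_mul_combination_eq_zero [IsDomain R] (ha : a ≠ 0) (hc : c ≠ 0)
    (hab : IsCoprime a b) (hac : IsCoprime a c) (hbc : IsCoprime b c)
    (h : x * (b * c) + y * (a * c) + z * (a * b) = 0) :
    ∃ p q : R, x = a * p ∧ y = b * -(p + q) ∧ z = c * q := by
  obtain ⟨p, rfl⟩ : a ∣ x := dvd_of_pairwise_mul_combination_eq_zero hab hac h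
  obtain ⟨q, rfl⟩ : c ∣ z :=
    dvd_of_pairwise_mul_combination_eq_zero (y := y) (z := a * p) hbc.symm hac.symm
      (by linear_combination h)
  refine ⟨p, q, rfl, mul_right_cancel₀ (mul_ne_zero ha hc) ?_, rfl⟩
  linear_combination h

end Syzygy

theorem add_mul_nonneg_of_min_le {R : Type*} [Ring R] [LinearOrder R] [IsOrderedRing R]
    {w t p x : R} (ht : 0 ≤ t) (hw : 0 ≤ w) (hwp : 0 ≤ w + t * p) (hx : min 0 p ≤ x) :
    0 ≤ w + t * x := by
  rcases min_le_iff.1 hx with hx | hx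
  · exact add_nonneg hw (mul_nonneg ht hx)
  · exact hwp.trans (by gcongr)

/-- `IsTrade s1 s2 s3 p q z' z` says that `z` arises from `z'` by gaining `p * s1` copies of the
first generator and `q * s3` of the third, and losing `(p + q) * s2` copies of the second. For the
generators `s2 * s3, s1 * s3, s1 * s2` these are the moves between factorizations of one element.
The counts `p` and `q` are integers, so that trades go in both directions. -/
structure IsTrade (s1 s2 s3 : ℕ) (p q : ℤ) (z' z : ℕ × ℕ × ℕ) : Prop where
  fst_eq : (z.1 : ℤ) = z'.1 + s1 * p
  snd_eq : (z.2.1 : ℤ) = z'.2.1 + s2 * -(p + q)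
  thd_eq : (z.2.2 : ℤ) = z'.2.2 + s3 * q

section Trade

variable {s1 s2 s3 s : ℕ} {z z' : ℕ × ℕ × ℕ} {p q : ℤ}

theorem exists_isTrade (h1 : s1 ≠ 0) (h3 : s3 ≠ 0) (c12 : Nat.Coprime s1 s2)
    (c13 : Nat.Coprime s1 s3) (c23 : Nat.Coprime s2 s3)
    (hz' : z' ∈ Zset (s2 * s3) (s1 * s3) (s1 * s2) s)
    (hz : z ∈ Zset (s2 * s3) (s1 * s3) (s1 * s2) s) :
    ∃ p q : ℤ, IsTrade s1 s2 s3 p q z' z := by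
  rw [Zset, Set.mem_ofPred_eq] at hz hz'
  zify at hz hz'
  have hsyz : (z.1 - z'.1 : ℤ) * (s2 * s3) + (z.2.1 - z'.2.1) * (s1 * s3) +
      (z.2.2 - z'.2.2) * (s1 * s2) = 0 := by linear_combination hz - hz'
  obtain ⟨p, q, hfst, hsnd, hthd⟩ := exists_of_pairwise_mul_combination_eq_zero
    (Nat.cast_ne_zero.2 h1) (Nat.cast_ne_zero.2 h3) c12.isCoprime c13.isCoprime c23.isCoprime hsyz
  exact ⟨p, q, by linarith, by linarith, by linarith⟩

theorem exists_isTrade_of_nonneg (hfst : 0 ≤ z'.1 + s1 * p) (hsnd : 0 ≤ z'.2.1 + s2 * -(p + q))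
    (hthd : 0 ≤ z'.2.2 + s3 * q) : ∃ z, IsTrade s1 s2 s3 p q z' z :=
  ⟨((z'.1 + s1 * p).toNat, (z'.2.1 + s2 * -(p + q)).toNat, (z'.2.2 + s3 * q).toNat),
    Int.toNat_of_nonneg hfst, Int.toNat_of_nonneg hsnd, Int.toNat_of_nonneg hthd⟩

namespace IsTrade

theorem mem_Zset (h : IsTrade s1 s2 s3 p q z' z)
    (hz' : z' ∈ Zset (s2 * s3) (s1 * s3) (s1 * s2) s) :
    z ∈ Zset (s2 * s3) (s1 * s3) (s1 * s2) s := by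
  rw [Zset, Set.mem_ofPred_eq] at hz' ⊢
  zify at hz' ⊢
  rw [h.fst_eq, h.snd_eq, h.thd_eq]
  linear_combination hz'

theorem len_sub_len (h : IsTrade s1 s2 s3 p q z' z) (h32 : s3 ≤ s2) (h21 : s2 ≤ s1) :
    (len z - len z' : ℤ) = (s1 - s2 : ℕ) * p - (s2 - s3 : ℕ) * q := by
  simp only [len, Nat.cast_add, Nat.cast_sub h21, Nat.cast_sub h32]
  linear_combination h.fst_eq + h.snd_eq + h.thd_eq

theorem exists_isTrade_of_min_le {x y : ℤ} (h : IsTrade s1 s2 s3 p q z' z) (hfst : min 0 p ≤ x)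
    (hsnd : min 0 (-(p + q)) ≤ -(x + y)) (hthd : min 0 q ≤ y) :
    ∃ z'', IsTrade s1 s2 s3 x y z' z'' := by
  refine exists_isTrade_of_nonneg
    (add_mul_nonneg_of_min_le ?_ ?_ (h.fst_eq ▸ ?_) hfst)
    (add_mul_nonneg_of_min_le ?_ ?_ (h.snd_eq ▸ ?_) hsnd)
    (add_mul_nonneg_of_min_le ?_ ?_ (h.thd_eq ▸ ?_) hthd)
  all_goals exact Int.natCast_nonneg _

end IsTrade

end Trade

/-- If two factorizations of `s` have length difference not in the Euclid set, then
there is a factorization of `s` of intermediate length. -/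
theorem intermediate_length_of_not_mem_euclid (s1 s2 s3 : ℕ) (h3 : 2 ≤ s3) (h32 : s3 < s2) (h21 : s2 < s1)
    (c12 : Nat.Coprime s1 s2) (c13 : Nat.Coprime s1 s3) (c23 : Nat.Coprime s2 s3)
    (s : ℕ) (hs : memS (s2 * s3) (s1 * s3) (s1 * s2) s)
    (z z' : ℕ × ℕ × ℕ)
    (hz : z ∈ Zset (s2 * s3) (s1 * s3) (s1 * s2) s)
    (hz' : z' ∈ Zset (s2 * s3) (s1 * s3) (s1 * s2) s)
    (hlt : len z' < len z)
    (hne : len z - len z' ∉ Euc (s1 - s2) (s2 - s3)) :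
    ∃ z'' ∈ Zset (s2 * s3) (s1 * s3) (s1 * s2) s,
      len z' < len z'' ∧ len z'' < len z := by
  obtain ⟨p, q, htrade⟩ := exists_isTrade (by omega) (by omega) c12 c13 c23 hz' hz
  have hlen := htrade.len_sub_len h32.le h21.le
  rw [← Nat.cast_sub hlt.le] at hlen
  obtain ⟨x, y, hfst, hsnd, hthd, hlo, hhi⟩ :=
    exists_int_between_of_not_mem_Euc (Nat.sub_pos_of_lt h21) (Nat.sub_pos_of_lt h32)
      (Nat.sub_pos_of_lt hlt) hlen.symm hne
  obtain ⟨z'', hpart⟩ := htrade.exists_isTrade_of_min_le hfst hsnd hthd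
  have hlen' := hpart.len_sub_len h32.le h21.le
  exact ⟨z'', hpart.mem_Zset hz', by omega, by omega⟩
end

section
/- Let s1 > s2 > s3 ≥ 2 be pairwise coprime positive integers, let S be the numerical semigroup generated by n1 = s2*s3, n2 = s1*s3, n3 = s1*s2, and set δ1 = s1 − s2, δ2 = s2 − s3. Then for every d ∈ Euc(δ1,δ2) there exist s ∈ S and factorizations z, z' ∈ Z(s) with d = ℓ(z) − ℓ(z') and such that every factorization z'' ∈ Z(s) satisfies either ℓ(z'') ≤ ℓ(z') or ℓ(z'') ≥ ℓ(z). -/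
/-!
If `s = k * s1 * s2 * s3`, coprimality forces every factorization of `s` to be of the form
`(x * s1, w * s2, y * s3)` with `x + w + y = k`, and its length is `k * s2 + x * δ1 - y * δ2`.
So the lengths of `s` are governed by the values `x * δ1 - y * δ2` with `x + y ≤ k`.

Each step of the Euclidean algorithm on `δ1`, `δ2` expresses the current pair `(d, e)` as
`d = u * δ1 - v * δ2`, `e = v' * δ2 - u' * δ1` (or the same with `δ1`, `δ2` exchanged), where the
coefficients are nonnegative and `u * v' - v * u' = 1`. Take `k = u + v`. By unimodularity
`(x, y) = α • (u, v) + β • (u', v')` with integers `α`, `β`, and `x * δ1 - y * δ2 = α * d - β * e`.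
If this value lies strictly between `0` and `d`, then either `α ≤ 0` and `β < 0`, so `x + y < 0`, or
`α ≥ 1` and `β > 0`, so `x + y > u + v`. Hence no length lies strictly between `k * s2` and
`k * s2 ± d`.
-/

/-- The pair `(d, e)` is obtained from `(a, b)` by a unimodular change of basis of the type that
occurs in the Euclidean algorithm: `d = u * a - v * b` and `e = v' * b - u' * a` with
`u * v' - v * u' = 1`. The equations are arranged so that no truncated subtraction occurs. -/
def UnimodularReduct (a b d e : ℕ) : Prop :=
  ∃ u v u' v' : ℕ, u * a = v * b + d ∧ v' * b = u' * a + e ∧ u * v' = v * u' + 1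

namespace UnimodularReduct

variable {a b d e m n : ℕ}

lemma refl (a b : ℕ) : UnimodularReduct a b a b :=
  ⟨1, 0, 0, 1, by simp⟩

lemma swap (h : UnimodularReduct a b d e) : UnimodularReduct b a e d := by
  obtain ⟨u, v, u', v', hd, he, hdet⟩ := h
  exact ⟨v', u', v, u, he, hd, by linarith⟩

lemma sub_mul (h : UnimodularReduct a b d e) {q : ℕ} (hq : q * e ≤ d) :
    UnimodularReduct a b (d - q * e) e := by
  obtain ⟨u, v, u', v', hd, he, hdet⟩ := h
  obtain ⟨r, rfl⟩ := Nat.exists_eq_add_of_le hq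
  rw [Nat.add_sub_cancel_left]
  exact ⟨u + q * u', v + q * v', u', v', by linear_combination hd - q * he, he,
    by linear_combination hdet⟩

lemma mod (h : UnimodularReduct a b d e) : UnimodularReduct a b (d % e) e := by
  rw [Nat.mod_eq_sub_div_mul]
  exact h.sub_mul (Nat.div_mul_le_self d e)

lemma etaSeq_or (h : UnimodularReduct a b m n ∨ UnimodularReduct b a m n) (j : ℕ) :
    UnimodularReduct a b (etaSeq m n j) (etaSeq m n (j + 1)) ∨
      UnimodularReduct b a (etaSeq m n j) (etaSeq m n (j + 1)) := by
  induction j with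
  | zero => exact h
  | succ j ih => exact (ih.imp (·.mod.swap) (·.mod.swap)).symm

lemma exists_of_mem_euc (hd : d ∈ Euc a b) :
    ∃ e, UnimodularReduct a b d e ∨ UnimodularReduct b a d e := by
  obtain ⟨j, -, q, -, hq, rfl⟩ := hd
  have hstart : UnimodularReduct a b (max a b) (min a b) ∨
      UnimodularReduct b a (max a b) (min a b) := by
    rcases le_total a b with hab | hab
    · rw [max_eq_right hab, min_eq_left hab]
      exact Or.inr (refl b a)
    · rw [max_eq_left hab, min_eq_right hab]
      exact Or.inl (refl a b)
  have hsub := Nat.mul_le_of_le_div _ _ _ hq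
  exact ⟨_, (etaSeq_or hstart j).imp (·.sub_mul hsub) (·.sub_mul hsub)⟩

lemma exists_forall_le_or_add_le (h : UnimodularReduct a b d e) :
    ∃ u v, u * a = v * b + d ∧
      ∀ x y, x + y ≤ u + v → x * a ≤ y * b ∨ y * b + d ≤ x * a := by
  obtain ⟨u, v, u', v', hd, he, hdet⟩ := h
  refine ⟨u, v, hd, fun x y hxy => ?_⟩
  by_contra! hlt
  have hpos : 0 < u' + v' := by
    by_contra! h0
    obtain ⟨rfl, rfl⟩ : u' = 0 ∧ v' = 0 := by omega
    omega
  zify at hd he hdet hxy hlt hpos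
  -- `(α, β)` are the coordinates of `(x, y)` in the basis `(u, v), (u', v')` (Cramer's rule).
  obtain ⟨α, hα⟩ : ∃ α : ℤ, α = x * v' - y * u' := ⟨_, rfl⟩
  obtain ⟨β, hβ⟩ : ∃ β : ℤ, β = u * y - v * x := ⟨_, rfl⟩
  have hvalue : (x * a - y * b : ℤ) = α * d - β * e := by
    rw [hα, hβ]
    linear_combination (x * v' - y * u') * hd - (u * y - v * x) * he - (x * a - y * b) * hdet
  have hweight : (x + y : ℤ) = α * (u + v) + β * (u' + v') := by
    rw [hα, hβ]
    linear_combination -(x + y) * hdet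
  rcases le_or_gt α 0 with hα0 | hα1
  · have hβneg : β < 0 := by
      by_contra! hβ0
      nlinarith
    have hweight_neg : (x + y : ℤ) < 0 := by nlinarith
    lia
  · have hβpos : 0 < β := by
      by_contra! hβ0
      nlinarith
    have hweight_gt : (u + v : ℤ) < x + y := by nlinarith
    lia

end UnimodularReduct

/-- `d` is the difference of two lengths of factorizations of `s` with no further length strictly
between them. In contrast to `DeltaOf`, the two lengths may agree, so that `d = 0` is allowed. -/
def IsLengthGap (n1 n2 n3 s d : ℕ) : Prop :=
  ∃ l, l ∈ Lset n1 n2 n3 s ∧ l + d ∈ Lset n1 n2 n3 s ∧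
    ∀ t ∈ Lset n1 n2 n3 s, t ≤ l ∨ l + d ≤ t

lemma IsLengthGap.exists_factorizations {n1 n2 n3 s d : ℕ} (h : IsLengthGap n1 n2 n3 s d) :
    memS n1 n2 n3 s ∧ ∃ z ∈ Zset n1 n2 n3 s, ∃ z' ∈ Zset n1 n2 n3 s,
      (d : ℤ) = (len z : ℤ) - (len z' : ℤ) ∧
      ∀ z'' ∈ Zset n1 n2 n3 s, len z'' ≤ len z' ∨ len z ≤ len z'' := by
  obtain ⟨_, ⟨z', hz', rfl⟩, ⟨z, hz, hlen⟩, hgap⟩ := h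
  refine ⟨⟨_, _, _, hz⟩, z, hz, z', hz', by omega, fun z'' hz'' => ?_⟩
  rw [hlen]
  exact hgap _ ⟨z'', hz'', rfl⟩

lemma dvd_of_mul_add_mul_eq_mul {s m x y z : ℕ} (hsm : Nat.Coprime s m)
    (h : x * m + s * y = s * z) : s ∣ x :=
  hsm.dvd_of_dvd_mul_right ((Nat.dvd_add_left (Nat.dvd_mul_right s y)).1 ⟨z, h⟩)

section BettiMultiples

variable {s1 s2 s3 : ℕ}

lemma mem_zset_mul_iff (h1 : 0 < s1) (h2 : 0 < s2) (h3 : 0 < s3)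
    (c12 : Nat.Coprime s1 s2) (c13 : Nat.Coprime s1 s3) (c23 : Nat.Coprime s2 s3)
    {k : ℕ} {z : ℕ × ℕ × ℕ} :
    z ∈ Zset (s2 * s3) (s1 * s3) (s1 * s2) (k * (s1 * s2 * s3)) ↔
      ∃ x w y, x + w + y = k ∧ z = (x * s1, w * s2, y * s3) := by
  constructor
  · obtain ⟨a1, a2, a3⟩ := z
    intro (hz : a1 * (s2 * s3) + a2 * (s1 * s3) + a3 * (s1 * s2) = k * (s1 * s2 * s3))
    obtain ⟨x, rfl⟩ : s1 ∣ a1 := dvd_of_mul_add_mul_eq_mul (c12.mul_right c13)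
      (y := a2 * s3 + a3 * s2) (z := k * (s2 * s3)) (by linarith)
    obtain ⟨w, rfl⟩ : s2 ∣ a2 := dvd_of_mul_add_mul_eq_mul (c12.symm.mul_right c23)
      (y := s1 * x * s3 + a3 * s1) (z := k * (s1 * s3)) (by linarith)
    obtain ⟨y, rfl⟩ : s3 ∣ a3 := dvd_of_mul_add_mul_eq_mul (c13.symm.mul_right c23.symm)
      (y := s1 * x * s2 + s2 * w * s1) (z := k * (s1 * s2)) (by linarith)
    have hk : (x + w + y) * (s1 * s2 * s3) = k * (s1 * s2 * s3) := by linarith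
    exact ⟨x, w, y, Nat.eq_of_mul_eq_mul_right (by positivity) hk, by simp only [mul_comm]⟩
  · rintro ⟨x, w, y, rfl, rfl⟩
    change x * s1 * (s2 * s3) + w * s2 * (s1 * s3) + y * s3 * (s1 * s2) =
      (x + w + y) * (s1 * s2 * s3)
    ring

lemma mem_lset_mul_iff (h3 : 0 < s3) (h32 : s3 ≤ s2) (h21 : s2 ≤ s1)
    (c12 : Nat.Coprime s1 s2) (c13 : Nat.Coprime s1 s3) (c23 : Nat.Coprime s2 s3) {k l : ℕ} :
    l ∈ Lset (s2 * s3) (s1 * s3) (s1 * s2) (k * (s1 * s2 * s3)) ↔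
      ∃ x y, x + y ≤ k ∧ l + y * (s2 - s3) = k * s2 + x * (s1 - s2) := by
  have hlen (x w y : ℕ) : len (x * s1, w * s2, y * s3) + y * (s2 - s3) =
      (x + w + y) * s2 + x * (s1 - s2) := by
    obtain ⟨b, rfl⟩ := Nat.exists_eq_add_of_le h32
    obtain ⟨a, rfl⟩ := Nat.exists_eq_add_of_le h21
    simp only [len, Nat.add_sub_cancel_left]
    ring
  have h2 := h3.trans_le h32
  simp only [Lset, Set.mem_image, mem_zset_mul_iff (h2.trans_le h21) h2 h3 c12 c13 c23]
  constructor
  · rintro ⟨_, ⟨x, w, y, rfl, rfl⟩, rfl⟩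
    exact ⟨x, y, by omega, hlen x w y⟩
  · rintro ⟨x, y, hxy, hl⟩
    obtain ⟨w, rfl⟩ : ∃ w, k = x + w + y := ⟨k - x - y, by omega⟩
    exact ⟨_, ⟨x, w, y, rfl, rfl⟩, Nat.add_right_cancel ((hlen x w y).trans hl.symm)⟩

lemma exists_isLengthGap_of_unimodularReduct (h3 : 0 < s3) (h32 : s3 ≤ s2) (h21 : s2 ≤ s1)
    (c12 : Nat.Coprime s1 s2) (c13 : Nat.Coprime s1 s3) (c23 : Nat.Coprime s2 s3) {d e : ℕ}
    (h : UnimodularReduct (s1 - s2) (s2 - s3) d e ∨ UnimodularReduct (s2 - s3) (s1 - s2) d e) :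
    ∃ k, IsLengthGap (s2 * s3) (s1 * s3) (s1 * s2) (k * (s1 * s2 * s3)) d := by
  simp only [IsLengthGap, mem_lset_mul_iff h3 h32 h21 c12 c13 c23]
  rcases h with h | h
  · obtain ⟨u, v, huv, hgap⟩ := h.exists_forall_le_or_add_le
    refine ⟨u + v, (u + v) * s2, ⟨0, 0, by simp⟩, ⟨u, v, le_rfl, by linarith⟩, ?_⟩
    rintro t ⟨x, y, hxy, ht⟩
    rcases hgap x y hxy with hle | hle
    · exact Or.inl (by linarith)
    · exact Or.inr (by linarith)
  · obtain ⟨v, u, huv, hgap⟩ := h.exists_forall_le_or_add_le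
    have hd : d ≤ (u + v) * s2 := calc
      d ≤ v * (s2 - s3) := huv ▸ Nat.le_add_left d _
      _ ≤ (u + v) * s2 := Nat.mul_le_mul (Nat.le_add_left v u) (Nat.sub_le s2 s3)
    obtain ⟨l, hl⟩ : ∃ l, (u + v) * s2 = l + d := Nat.exists_eq_add_of_le' hd
    refine ⟨u + v, l, ⟨u, v, le_rfl, by linarith⟩, ⟨0, 0, by simp [hl]⟩, ?_⟩
    rintro t ⟨x, y, hxy, ht⟩
    rcases hgap y x (by linarith) with hle | hle
    · exact Or.inr (by linarith)
    · exact Or.inl (by linarith)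

end BettiMultiples

/-- Every element of the Euclid set is realized as a gap between consecutive lengths of
factorizations of some element of the semigroup. -/
theorem euclid_realized_as_gap (s1 s2 s3 : ℕ) (h3 : 2 ≤ s3) (h32 : s3 < s2) (h21 : s2 < s1)
    (c12 : Nat.Coprime s1 s2) (c13 : Nat.Coprime s1 s3) (c23 : Nat.Coprime s2 s3) :
    ∀ d ∈ Euc (s1 - s2) (s2 - s3),
      ∃ s : ℕ, memS (s2 * s3) (s1 * s3) (s1 * s2) s ∧
        ∃ z ∈ Zset (s2 * s3) (s1 * s3) (s1 * s2) s,
          ∃ z' ∈ Zset (s2 * s3) (s1 * s3) (s1 * s2) s,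
            (d : ℤ) = (len z : ℤ) - (len z' : ℤ) ∧
            ∀ z'' ∈ Zset (s2 * s3) (s1 * s3) (s1 * s2) s,
              len z'' ≤ len z' ∨ len z ≤ len z'' := by
  intro d hd
  obtain ⟨e, he⟩ := UnimodularReduct.exists_of_mem_euc hd
  obtain ⟨k, hgap⟩ :=
    exists_isLengthGap_of_unimodularReduct (by omega) h32.le h21.le c12 c13 c23 he
  exact ⟨_, hgap.exists_factorizations⟩
end
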